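/- Let G be a finitely generated co-Hopfian virtually free group. Then G is rigid: every group endomorphism φ of G such that φ ∼ id_G (i.e. φ coincides with a conjugation on every finite subgroup of G) is an automorphism of G (bijective). -/

import Mathlib

open FirstOrder Language

/-- Function symbols of the first-order language of groups:
a binary multiplication, a unary inverse and a constant for the identity. -/
inductive GroupFunc : ℕ → Type
  | mul : GroupFunc 2
  | inv : GroupFunc 1
  | one : GroupFunc 0

/-- The first-order language of groups. -/
def groupLang : FirstOrder.Language :=
  { Functions := GroupFunc
    Relations := fun _ => Empty }

/-- Every group is a structure for the language of groups in the natural way. -/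
instance groupLangStructure (G : Type*) [Group G] : groupLang.Structure G where
  funMap {n} f v :=
    match f with
    | .mul => v 0 * v 1
    | .inv => (v 0)⁻¹
    | .one => 1
  RelMap {n} r _ := r.elim

/-- Existential formulas: iterated existential quantifications of a
quantifier-free formula. -/
inductive IsExistentialQF {α : Type*} : ∀ {n : ℕ}, groupLang.BoundedFormula α n → Prop
  | of_isQF {n : ℕ} {φ : groupLang.BoundedFormula α n} (h : φ.IsQF) : IsExistentialQF φ
  | ex {n : ℕ} {φ : groupLang.BoundedFormula α (n + 1)} (h : IsExistentialQF φ) :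
      IsExistentialQF φ.ex

/-- Universal formulas: iterated universal quantifications of a
quantifier-free formula. -/
inductive IsUniversalQF {α : Type*} : ∀ {n : ℕ}, groupLang.BoundedFormula α n → Prop
  | of_isQF {n : ℕ} {φ : groupLang.BoundedFormula α n} (h : φ.IsQF) : IsUniversalQF φ
  | all {n : ℕ} {φ : groupLang.BoundedFormula α (n + 1)} (h : IsUniversalQF φ) :
      IsUniversalQF φ.all

/-- ∀∃-formulas: iterated universal quantifications of an existential formula. -/
inductive IsAE {α : Type*} : ∀ {n : ℕ}, groupLang.BoundedFormula α n → Prop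
  | of_existential {n : ℕ} {φ : groupLang.BoundedFormula α n} (h : IsExistentialQF φ) : IsAE φ
  | all {n : ℕ} {φ : groupLang.BoundedFormula α (n + 1)} (h : IsAE φ) : IsAE φ.all

/-- A group is virtually free if it has a free subgroup of finite index. -/
def VirtuallyFree (G : Type*) [Group G] : Prop :=
  ∃ H : Subgroup G, H.FiniteIndex ∧ Nonempty (IsFreeGroup H)

/-- A group is co-Hopfian if every injective endomorphism is surjective. -/
def CoHopfian (G : Type*) [Group G] : Prop :=
  ∀ φ : G →* G, Function.Injective φ → Function.Surjective φ

/-- Two homomorphisms `φ, φ' : G → G'` are equivalent if they coincide up to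
conjugation on every finite subgroup of `G`. -/
def HomEquiv {G G' : Type*} [Group G] [Group G'] (φ φ' : G →* G') : Prop :=
  ∀ H : Subgroup G, (H : Set G).Finite →
    ∃ g' : G', ∀ h ∈ H, φ' h = g' * φ h * g'⁻¹

/-- Two groups are ∀∃-equivalent if they satisfy the same ∀∃-sentences. -/
def AEEquivalent (G : Type*) (G' : Type*) [Group G] [Group G'] : Prop :=
  ∀ φ : groupLang.Sentence, IsAE φ → (G ⊨ φ ↔ G' ⊨ φ)

/-- Two groups are ∃-equivalent if they satisfy the same existential sentences. -/
def ExistentiallyEquivalent (G : Type*) (G' : Type*) [Group G] [Group G'] : Prop :=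
  ∀ φ : groupLang.Sentence, IsExistentialQF φ → (G ⊨ φ ↔ G' ⊨ φ)

/-- An endomorphism is rigid-testing: `G` is rigid if every endomorphism
equivalent to the identity is an automorphism. -/
def Rigid (G : Type*) [Group G] : Prop :=
  ∀ φ : G →* G, HomEquiv φ (MonoidHom.id G) → Function.Bijective φ

/-- `Out G` is finite, expressed as: the inner automorphisms form a finite index
subgroup of `Aut G`. -/
def OutFinite (G : Type*) [Group G] : Prop :=
  (MulAut.conj : G →* MulAut G).range.FiniteIndex

/-- Iterated composition of an endomorphism. -/
def homPow {G : Type*} [Group G] (φ : G →* G) : ℕ → (G →* G)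
  | 0 => MonoidHom.id G
  | n + 1 => φ.comp (homPow φ n)

/-- An endomorphism `φ` of `G` is class-permuting if some positive power of `φ`
is equivalent to the identity of `G`. -/
def ClassPermuting {G : Type*} [Group G] (φ : G →* G) : Prop :=
  ∃ n : ℕ, 1 ≤ n ∧ HomEquiv (homPow φ n) (MonoidHom.id G)

/-- A maximal finite subgroup: a finite subgroup maximal with respect to
inclusion among finite subgroups. -/
def MaximalFiniteSubgroup {G : Type*} [Group G] (A : Subgroup G) : Prop :=
  (A : Set G).Finite ∧ ∀ B : Subgroup G, (B : Set G).Finite → A ≤ B → A = B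

/-- Two subgroups are conjugate. -/
def SubgroupConj {G : Type*} [Group G] (A B : Subgroup G) : Prop :=
  ∃ g : G, B = A.map (MulAut.conj g).toMonoidHom

/-- A group is strongly co-Hopfian if there is a finite subset `F` of
`G \ {1}` such that every endomorphism whose kernel misses `F` is an
automorphism. -/
def StronglyCoHopfian (G : Type*) [Group G] : Prop :=
  ∃ F : Finset G, (1 : G) ∉ F ∧
    ∀ φ : G →* G, (∀ f ∈ F, φ f ≠ 1) → Function.Bijective φ

/-- A group is finitely presented. -/
def GroupFinitelyPresented (G : Type*) [Group G] : Prop :=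
  ∃ (n : ℕ) (rels : Finset (FreeGroup (Fin n))),
    Nonempty (PresentedGroup (rels : Set (FreeGroup (Fin n))) ≃* G)

/-!
Since `G` is co-Hopfian, only the injectivity of `φ` is at stake. The group acts on a tree with
finite vertex stabilizers, on each of which `φ` agrees with a conjugation; hence there are group
elements `P x` such that the map of vertices `F x = P x • x` is `φ`-equivariant, and it suffices to
show that `F` is injective: an element of the kernel of `φ` then fixes every vertex, so it lies in a
finite subgroup, on which `φ` is a conjugation.

An edge whose stabilizer is centralized by an element pushing one of its halfspaces properly into
itself would give rise to a twisting endomorphism of `G` that is injective but not surjective. As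
`G` is co-Hopfian there is no such edge, and it follows that edges carry a `G`-invariant strict
order for which the geodesic between the images under `F` of the ends of an edge `a` contains
exactly one edge that does not outrank `a`. If `F x = F y` with `x ≠ y`, choose on the geodesic from
`x` to `y` an edge that outranks none of the others. The image path is closed, so it has to cross
the image of that edge a second time, which it can only do at the image of another edge. The part of
the geodesic between these two edges has equal images at its ends and is shorter, and one concludes
by induction.

The tree is dual to a family of cuts of a Cayley graph. Among the cuts separating a given pair of
ends take those of minimal size, and among these the ones crossing the fewest minimal cuts: by
submodularity two such optimal cuts never cross. Every nontrivial element of a free subgroup of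
finite index translates an optimal cut strictly into itself, or its inverse does; so it fixes no
vertex, and vertex stabilizers embed into the finite set of cosets.
-/

open Pointwise

section Tree

variable {G V : Type*}

/-- The members of a family `H` of subsets that contain `y` but not `x`. When `H` is the set of
halfspaces of a tree, these correspond to the edges of the geodesic from `x` to `y`. -/
def separating (H : Set (Set V)) (x y : V) : Set (Set V) :=
  {a ∈ H | x ∉ a ∧ y ∈ a}

variable [Group G] [MulAction G V]

/-- A simplicial tree with vertex set `V` on which `G` acts without inversions, encoded by its set
of halfspaces: an oriented edge is represented by the set of vertices lying ahead of it. -/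
structure HalfspaceTree (G V : Type*) [Group G] [MulAction G V] where
  halfspaces : Set (Set V)
  smul_mem (g : G) {a : Set V} : a ∈ halfspaces → g • a ∈ halfspaces
  compl_mem {a : Set V} : a ∈ halfspaces → aᶜ ∈ halfspaces
  smul_ne_compl (g : G) {a : Set V} : a ∈ halfspaces → g • a ≠ aᶜ
  nested {a b : Set V} : a ∈ halfspaces → b ∈ halfspaces → a ⊆ b ∨ b ⊆ a ∨ a ⊆ bᶜ ∨ bᶜ ⊆ a
  finite_separating (x y : V) : (separating halfspaces x y).Finite
  separating_nonempty {x y : V} : x ≠ y → (separating halfspaces x y).Nonempty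
  exists_edge {a : Set V} : a ∈ halfspaces → ∃ x y, separating halfspaces x y = {a}

namespace HalfspaceTree

variable {T : HalfspaceTree G V} {x y x' y' w u v₀ : V} {a b : Set V}

/-- `T.IsEdge x y a` says that `x` and `y` are adjacent in the tree and that `a` is the halfspace
of the oriented edge from `x` to `y`. -/
def IsEdge (T : HalfspaceTree G V) (x y : V) (a : Set V) : Prop :=
  separating T.halfspaces x y = {a}

namespace IsEdge

theorem mem_separating (h : T.IsEdge x y a) : a ∈ separating T.halfspaces x y :=
  h ▸ Set.mem_singleton a

theorem mem (h : T.IsEdge x y a) : a ∈ T.halfspaces := h.mem_separating.1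

theorem left_notMem (h : T.IsEdge x y a) : x ∉ a := h.mem_separating.2.1

theorem right_mem (h : T.IsEdge x y a) : y ∈ a := h.mem_separating.2.2

theorem eq_of_separates (h : T.IsEdge x y a) (hb : b ∈ T.halfspaces) (hx : x ∉ b) (hy : y ∈ b) :
    b = a :=
  Set.mem_singleton_iff.1 (h ▸ (⟨hb, hx, hy⟩ : b ∈ separating T.halfspaces x y))

theorem eq_compl_of_separates (h : T.IsEdge x y a) (hb : b ∈ T.halfspaces) (hx : x ∈ b)
    (hy : y ∉ b) : b = aᶜ := by
  rw [← h.eq_of_separates (T.compl_mem hb) (not_not.2 hx) hy, _root_.compl_compl]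

theorem symm (h : T.IsEdge x y a) : T.IsEdge y x aᶜ :=
  Set.eq_singleton_iff_unique_mem.2
    ⟨⟨T.compl_mem h.mem, not_not.2 h.right_mem, h.left_notMem⟩,
      fun _ hb ↦ h.eq_compl_of_separates hb.1 hb.2.2 hb.2.1⟩

theorem smul (h : T.IsEdge x y a) (g : G) : T.IsEdge (g • x) (g • y) (g • a) := by
  refine Set.eq_singleton_iff_unique_mem.2 ⟨⟨T.smul_mem g h.mem, ?_, ?_⟩, fun b hb ↦ ?_⟩
  · rw [Set.smul_mem_smul_set_iff]; exact h.left_notMem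
  · rw [Set.smul_mem_smul_set_iff]; exact h.right_mem
  · rw [← h.eq_of_separates (T.smul_mem g⁻¹ hb.1), smul_inv_smul]
    · simpa [Set.mem_inv_smul_set_iff] using hb.2.1
    · simpa [Set.mem_inv_smul_set_iff] using hb.2.2

theorem halfspace_unique (h : T.IsEdge x y a) (h' : T.IsEdge x y b) : a = b :=
  h'.eq_of_separates h.mem h.left_notMem h.right_mem

theorem subset_of_notMem (h : T.IsEdge x y a) (hb : b ∈ T.halfspaces) (hx : x ∉ b) (hy : y ∉ b)
    (hwa : w ∈ a) (hwb : w ∈ b) : b ⊆ a := by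
  rcases T.nested h.mem hb with hab | hba | hdisj | hcov
  · exact absurd (hab h.right_mem) hy
  · exact hba
  · exact absurd hwb (hdisj hwa)
  · exact absurd (hcov hx) h.left_notMem

theorem right_unique (h : T.IsEdge x y a) (h' : T.IsEdge x' y' a) : y = y' := by
  by_contra hne
  obtain ⟨b, hb, hy, hy'⟩ := T.separating_nonempty hne
  have hx : x ∉ b := fun hx ↦
    (h.eq_compl_of_separates hb hx hy ▸ hy' : y' ∈ aᶜ) h'.right_mem
  have hx' : x' ∈ b := by
    by_contra hx'
    exact hy (h'.eq_of_separates hb hx' hy' ▸ h.right_mem)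
  exact h'.left_notMem (h.subset_of_notMem hb hx hy h'.right_mem hy' hx')

theorem left_unique (h : T.IsEdge x y a) (h' : T.IsEdge x' y' a) : x = x' :=
  h.symm.right_unique h'.symm

theorem subset_of_ne (h : T.IsEdge x y a) (h' : T.IsEdge y w b) (hne : w ≠ x) : b ⊆ a := by
  have hba : b ≠ aᶜ := by
    rintro rfl
    exact hne (h'.right_unique h.symm)
  have hx : x ∉ b := fun hx ↦ hba (h.eq_compl_of_separates h'.mem hx h'.left_notMem)
  have hw : w ∈ a := by
    by_contra hw
    exact hba (h'.eq_of_separates (T.compl_mem h.mem) (not_not.2 h.right_mem) hw).symm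
  exact h.subset_of_notMem h'.mem hx h'.left_notMem hw h'.right_mem

theorem smul_left_eq (h : T.IsEdge x y a) {g : G} (hg : g • a = a) : g • x = x :=
  left_unique (hg ▸ h.smul g) h

theorem smul_right_eq (h : T.IsEdge x y a) {g : G} (hg : g • a = a) : g • y = y :=
  right_unique (hg ▸ h.smul g) h

end IsEdge

theorem exists_isEdge (ha : a ∈ T.halfspaces) : ∃ x y, T.IsEdge x y a :=
  T.exists_edge ha

theorem exists_first_edge (hne : x ≠ y) : ∃ x' a, T.IsEdge x x' a ∧ y ∈ a := by
  obtain ⟨a, ha, hmax⟩ := (T.finite_separating x y).exists_maximal (T.separating_nonempty hne)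
  obtain ⟨o, t, he⟩ := T.exists_isEdge ha.1
  suffices hox : x = o by exact ⟨t, a, hox ▸ he, ha.2.2⟩
  by_contra hox
  obtain ⟨b, hb, hxb, hob⟩ := T.separating_nonempty hox
  have htb : t ∈ b := by
    by_contra htb
    exact (he.eq_compl_of_separates hb hob htb ▸ hxb : x ∉ aᶜ) ha.2.1
  have hab : a ⊆ b := Set.compl_subset_compl.1 <|
    he.symm.subset_of_notMem (T.compl_mem hb) (not_not.2 htb) (not_not.2 hob) ha.2.1 hxb
  exact he.left_notMem (hmax ⟨hb, hxb, hab ha.2.2⟩ hab hob)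

/-- The combinatorial distance in the tree. -/
noncomputable def dist (T : HalfspaceTree G V) (x y : V) : ℕ :=
  (separating T.halfspaces x y).ncard

theorem IsEdge.dist_lt (h : T.IsEdge x x' a) (hy : y ∈ a) : T.dist x' y < T.dist x y := by
  refine Set.ncard_lt_ncard ⟨fun b hb ↦ ⟨hb.1, fun hx ↦ ?_, hb.2.2⟩, fun hsub ↦ ?_⟩
    (T.finite_separating x y)
  · exact (h.eq_compl_of_separates hb.1 hx hb.2.1 ▸ hb.2.2 : y ∈ aᶜ) hy
  · exact (hsub ⟨h.mem, h.left_notMem, hy⟩).2.1 h.right_mem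

theorem edge_induction (T : HalfspaceTree G V) {p : V → Prop} (v₀ : V) (base : p v₀)
    (step : ∀ x y a, T.IsEdge x y a → p x → p y) (x : V) : p x := by
  induction hn : T.dist x v₀ using Nat.strong_induction_on generalizing x with
  | _ n ih =>
    by_cases hx : x = v₀
    · exact hx ▸ base
    · obtain ⟨x', a, he, hv⟩ := T.exists_first_edge hx
      exact step x' x aᶜ he.symm (ih _ (hn ▸ he.dist_lt hv) x' rfl)

open Classical in
/-- The primitive vanishing at `v₀` of a function `ζ` on oriented edges: the ordered product of the
values of `ζ` along the geodesic from `v₀` to `x`. -/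
noncomputable def potential (T : HalfspaceTree G V) (ζ : Set V → G) (v₀ x : V) : G :=
  if h : x = v₀ then 1
  else T.potential ζ v₀ (T.exists_first_edge h).choose *
    (ζ (T.exists_first_edge h).choose_spec.choose)⁻¹
termination_by T.dist x v₀
decreasing_by
  exact (T.exists_first_edge h).choose_spec.choose_spec.1.dist_lt
    (T.exists_first_edge h).choose_spec.choose_spec.2

theorem potential_self (T : HalfspaceTree G V) (ζ : Set V → G) (v₀ : V) :
    T.potential ζ v₀ v₀ = 1 := by
  rw [potential, dif_pos rfl]

theorem exists_potential_eq (T : HalfspaceTree G V) (ζ : Set V → G) (hx : x ≠ v₀) :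
    ∃ x' a, T.IsEdge x x' a ∧ v₀ ∈ a ∧ T.potential ζ v₀ x = T.potential ζ v₀ x' * (ζ a)⁻¹ := by
  have hspec := (T.exists_first_edge hx).choose_spec.choose_spec
  exact ⟨_, _, hspec.1, hspec.2, by rw [potential, dif_neg hx]⟩

theorem potential_of_isEdge {ζ : Set V → G} (hζ : ∀ a ∈ T.halfspaces, ζ aᶜ = (ζ a)⁻¹) (v₀ : V)
    (h : T.IsEdge x y a) : T.potential ζ v₀ y = T.potential ζ v₀ x * ζ a := by
  wlog hv : v₀ ∉ a generalizing x y a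
  · rw [this h.symm (by simpa using hv), hζ a h.mem, inv_mul_cancel_right]
  have hy : y ≠ v₀ := by
    rintro rfl
    exact hv h.right_mem
  obtain ⟨x', b, hb, hvb, hP⟩ := T.exists_potential_eq ζ hy
  obtain rfl : x' = x := by
    by_contra hne
    exact hv (h.subset_of_ne hb hne hvb)
  rw [hP, hb.halfspace_unique h.symm, hζ a h.mem, inv_inv]

/-- A conjugation-equivariant function on oriented edges, inverted when edges are reversed, whose
value at each edge pushes the halfspace of that edge into itself. -/
structure IsTwisting (T : HalfspaceTree G V) (ζ : Set V → G) : Prop where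
  map_compl : ∀ a ∈ T.halfspaces, ζ aᶜ = (ζ a)⁻¹
  map_smul : ∀ g : G, ∀ a ∈ T.halfspaces, ζ (g • a) = g * ζ a * g⁻¹
  smul_subset : ∀ a ∈ T.halfspaces, ζ a • a ⊆ a

namespace IsTwisting

variable {ζ : Set V → G}

theorem potential_smul (hζ : T.IsTwisting ζ) (v₀ : V) (g : G) (x : V) :
    T.potential ζ v₀ (g • x) = T.potential ζ v₀ (g • v₀) * g * T.potential ζ v₀ x * g⁻¹ := by
  induction x using T.edge_induction v₀ with
  | base => rw [potential_self]; group
  | step x y a h hx =>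
    rw [potential_of_isEdge hζ.map_compl v₀ (h.smul g), hx,
      potential_of_isEdge hζ.map_compl v₀ h, hζ.map_smul g a h.mem]
    group

/-- The endomorphism `g ↦ P (g • v₀) * g`, where `P` is the potential of the twisting based at
`v₀`. -/
noncomputable def twistedEnd (hζ : T.IsTwisting ζ) (v₀ : V) : G →* G where
  toFun g := T.potential ζ v₀ (g • v₀) * g
  map_one' := by rw [one_smul, potential_self, mul_one]
  map_mul' g h := by rw [mul_smul, hζ.potential_smul v₀ g (h • v₀)]; group

theorem twistedEnd_apply (hζ : T.IsTwisting ζ) (v₀ : V) (g : G) :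
    hζ.twistedEnd v₀ g = T.potential ζ v₀ (g • v₀) * g := rfl

theorem twistedEnd_smul_potential_smul (hζ : T.IsTwisting ζ) (v₀ : V) (g : G) (x : V) :
    hζ.twistedEnd v₀ g • T.potential ζ v₀ x • x = T.potential ζ v₀ (g • x) • g • x := by
  rw [twistedEnd_apply, hζ.potential_smul v₀ g x]
  simp only [mul_smul, inv_smul_smul]

theorem potential_smul_mem (hζ : T.IsTwisting ζ) (v₀ : V) (h : T.IsEdge x y a) (hu : u ∈ a) :
    T.potential ζ v₀ u • u ∈ T.potential ζ v₀ y • a := by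
  induction hn : T.dist y u using Nat.strong_induction_on generalizing x y a with
  | _ n ih =>
    by_cases hyu : y = u
    · rwa [hyu, Set.smul_mem_smul_set_iff]
    obtain ⟨y', b, hb, hub⟩ := T.exists_first_edge hyu
    have hne : y' ≠ x := by
      rintro rfl
      exact (hb.halfspace_unique h.symm ▸ hub : u ∈ aᶜ) hu
    have hmem := ih _ (hn ▸ hb.dist_lt hub) hb hub rfl
    rw [potential_of_isEdge hζ.map_compl v₀ hb, mul_smul] at hmem
    exact Set.smul_set_mono ((hζ.smul_subset b hb.mem).trans (h.subset_of_ne hb hne)) hmem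

theorem potential_smul_mem_of_isEdge_base (hζ : T.IsTwisting ζ) (h : T.IsEdge v₀ y a)
    (hu : u ∈ a) : T.potential ζ v₀ u • u ∈ a := by
  have hmem := hζ.potential_smul_mem v₀ h hu
  rw [potential_of_isEdge hζ.map_compl v₀ h, potential_self, one_mul] at hmem
  exact hζ.smul_subset a h.mem hmem

theorem eq_base_of_potential_smul_eq (hζ : T.IsTwisting ζ)
    (hx : T.potential ζ v₀ x • x = v₀) : x = v₀ := by
  by_contra hne
  obtain ⟨y, a, h, hxa⟩ := T.exists_first_edge (Ne.symm hne)
  exact h.left_notMem (hx ▸ hζ.potential_smul_mem_of_isEdge_base h hxa)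

theorem twistedEnd_injective (hζ : T.IsTwisting ζ) (v₀ : V) :
    Function.Injective (hζ.twistedEnd v₀) := by
  refine (injective_iff_map_eq_one _).2 fun g hg ↦ ?_
  have hgv : g • v₀ = v₀ := hζ.eq_base_of_potential_smul_eq <| by
    rw [← hζ.twistedEnd_smul_potential_smul, hg, potential_self, one_smul, one_smul]
  rwa [twistedEnd_apply, hgv, potential_self, one_mul] at hg

theorem smul_eq_of_coHopfian (hζ : T.IsTwisting ζ) (hG : CoHopfian G) (ha : a ∈ T.halfspaces) :
    ζ a • a = a := by
  obtain ⟨v₀, w, he⟩ := T.exists_isEdge ha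
  have hPw : T.potential ζ v₀ w = ζ a := by
    rw [potential_of_isEdge hζ.map_compl v₀ he, potential_self, one_mul]
  obtain ⟨g, hg⟩ := hG _ (hζ.twistedEnd_injective v₀) (ζ a)⁻¹
  have hFw : T.potential ζ v₀ (g • w) • g • w = w := by
    rw [← hζ.twistedEnd_smul_potential_smul, hg, hPw, inv_smul_smul]
  have hne : v₀ ≠ g • w := by
    intro h
    rw [← h, potential_self, one_smul] at hFw
    exact he.left_notMem (hFw ▸ he.right_mem)
  obtain ⟨y, b, hb, hwb⟩ := T.exists_first_edge hne
  have hba : b = a := he.eq_of_separates hb.mem hb.left_notMem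
    (hFw ▸ hζ.potential_smul_mem_of_isEdge_base hb hwb)
  have hmem := hζ.potential_smul_mem v₀ he (hba ▸ hwb)
  rw [hFw, hPw] at hmem
  exact he.eq_of_separates (T.smul_mem _ ha) (fun h ↦ he.left_notMem (hζ.smul_subset a ha h)) hmem

end IsTwisting

end HalfspaceTree

end Tree

section Stabilizers

open MulAction

variable {G α V : Type*} [Group G] [MulAction G α] [MulAction G V] {g z : G} {a b : α}

instance covariantClass_smul_set : CovariantClass G (Set V) HSMul.hSMul LE.le :=
  ⟨fun _ _ _ h ↦ Set.smul_set_mono h⟩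

theorem exists_pow_mem_centralizer (K : Subgroup G) [Finite K]
    (hz : z ∈ Subgroup.normalizer (K : Set G)) :
    ∃ n, 0 < n ∧ z ^ n ∈ Subgroup.centralizer (K : Set G) := by
  have : Finite (MulAut K) := Finite.of_injective _ DFunLike.coe_injective
  obtain ⟨n, hn, h⟩ := (isOfFinOrder_of_finite (K.normalizerMonoidHom ⟨z, hz⟩)).exists_pow_eq_one
  rw [← map_pow, ← MonoidHom.mem_ker, Subgroup.normalizerMonoidHom_ker] at h
  exact ⟨n, hn, h⟩

theorem mem_normalizer_stabilizer_iff :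
    z ∈ Subgroup.normalizer (stabilizer G a : Set G) ↔ stabilizer G (z • a) = stabilizer G a := by
  rw [Subgroup.mem_normalizer_iff_map_conj_eq, stabilizer_smul_eq_stabilizer_map_conj]
  rfl

theorem stabilizer_smul_congr (g : G) (h : stabilizer G a = stabilizer G b) :
    stabilizer G (g • a) = stabilizer G (g • b) := by
  rw [stabilizer_smul_eq_stabilizer_map_conj, h, stabilizer_smul_eq_stabilizer_map_conj]

theorem card_stabilizer_smul (g : G) (a : α) :
    Nat.card (stabilizer G (g • a)) = Nat.card (stabilizer G a) :=
  (Nat.card_congr (stabilizerEquivStabilizer rfl).toEquiv).symm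

/-- The centralizer of the stabilizer of `a`. -/
def stabCentralizer (G : Type*) {α : Type*} [Group G] [MulAction G α] (a : α) : Subgroup G :=
  Subgroup.centralizer (stabilizer G a : Set G)

theorem mem_stabCentralizer_iff :
    z ∈ stabCentralizer G a ↔ ∀ c ∈ stabilizer G a, c * z = z * c :=
  Subgroup.mem_centralizer_iff

theorem stabCentralizer_congr (h : stabilizer G a = stabilizer G b) :
    stabCentralizer G a = stabCentralizer G b := by
  rw [stabCentralizer, h, stabCentralizer]

theorem stabCentralizer_compl (a : Set V) : stabCentralizer G aᶜ = stabCentralizer G a :=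
  stabCentralizer_congr (stabilizer_compl G V)

theorem stabilizer_smul_of_mem_stabCentralizer (hz : z ∈ stabCentralizer G a) :
    stabilizer G (z • a) = stabilizer G a :=
  mem_normalizer_stabilizer_iff.1 (Subgroup.centralizer_le_normalizer _ hz)

theorem conj_mem_stabCentralizer (g : G) (hz : z ∈ stabCentralizer G a) :
    g * z * g⁻¹ ∈ stabCentralizer G (g • a) := by
  refine mem_stabCentralizer_iff.2 fun c hc ↦ ?_
  rw [stabilizer_smul_eq_stabilizer_map_conj] at hc
  obtain ⟨k, hk, rfl⟩ := hc
  have hkz := mem_stabCentralizer_iff.1 hz k hk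
  change g * k * g⁻¹ * (g * z * g⁻¹) = g * z * g⁻¹ * (g * k * g⁻¹)
  calc g * k * g⁻¹ * (g * z * g⁻¹) = g * (k * z) * g⁻¹ := by group
    _ = g * z * g⁻¹ * (g * k * g⁻¹) := by rw [hkz]; group

open Classical in
/-- The function on the orbit of `a₀` taking the value `g * z * g⁻¹` at `g • a₀`, extended by `1`.
It is well defined when `z` centralizes the stabilizer of `a₀`. -/
noncomputable def orbitConj (z : G) (a₀ a : α) : G :=
  if h : ∃ g : G, g • a₀ = a then h.choose * z * h.choose⁻¹ else 1

theorem orbitConj_of_notMem (z : G) (h : b ∉ orbit G a) : orbitConj z a b = 1 :=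
  dif_neg h

theorem orbitConj_smul_self (hz : z ∈ stabCentralizer G a) (g : G) :
    orbitConj z a (g • a) = g * z * g⁻¹ := by
  have h : ∃ k : G, k • a = g • a := ⟨g, rfl⟩
  rw [orbitConj, dif_pos h]
  have hc : h.choose⁻¹ * g ∈ stabilizer G a := by
    rw [mem_stabilizer_iff, mul_smul, inv_smul_eq_iff, h.choose_spec]
  have hcz := mem_stabCentralizer_iff.1 hz _ hc
  calc h.choose * z * h.choose⁻¹ = h.choose * (z * (h.choose⁻¹ * g)) * g⁻¹ := by group
    _ = g * z * g⁻¹ := by rw [← hcz]; group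

theorem orbitConj_smul (hz : z ∈ stabCentralizer G a) (g : G) (b : α) :
    orbitConj z a (g • b) = g * orbitConj z a b * g⁻¹ := by
  by_cases hb : b ∈ orbit G a
  · obtain ⟨k, rfl⟩ := hb
    change orbitConj z a (g • k • a) = g * orbitConj z a (k • a) * g⁻¹
    rw [← mul_smul, orbitConj_smul_self hz, orbitConj_smul_self hz]
    group
  · have hgb : g • b ∉ orbit G a := fun h ↦ hb (by simpa using mem_orbit_of_mem_orbit g⁻¹ h)
    rw [orbitConj_of_notMem z hb, orbitConj_of_notMem z hgb]
    group

end Stabilizers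

section Rooted

open MulAction

variable {G V : Type*} [Group G] [MulAction G V]

namespace HalfspaceTree

variable {T : HalfspaceTree G V} {x y u w : V} {a b d e : Set V} {g z : G}

theorem isTwisting_orbitConj (ha : a ∈ T.halfspaces) (hz : z ∈ stabCentralizer G a)
    (hza : z • a ⊆ a) : T.IsTwisting fun b ↦ orbitConj z a b * (orbitConj z a bᶜ)⁻¹ where
  map_compl b _ := by rw [_root_.compl_compl, mul_inv_rev, inv_inv]
  map_smul g b _ := by
    rw [← Set.smul_set_compl, orbitConj_smul hz, orbitConj_smul hz]
    group
  smul_subset b _ := by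
    have notMem (g : G) : (g • a)ᶜ ∉ orbit G a := by
      rintro ⟨k, hk : k • a = (g • a)ᶜ⟩
      apply T.smul_ne_compl (g⁻¹ * k) ha
      rw [mul_smul, hk, Set.smul_set_compl, inv_smul_smul]
    have conj_smul_subset (g : G) : (g * z * g⁻¹) • g • a ⊆ g • a := by
      rw [← mul_smul, inv_mul_cancel_right, mul_smul]
      exact Set.smul_set_mono hza
    by_cases hb : b ∈ orbit G a
    · obtain ⟨g, rfl⟩ := hb
      change (orbitConj z a (g • a) * (orbitConj z a (g • a)ᶜ)⁻¹) • g • a ⊆ g • a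
      rw [orbitConj_of_notMem z (notMem g), inv_one, mul_one, orbitConj_smul_self hz]
      exact conj_smul_subset g
    · by_cases hb' : bᶜ ∈ orbit G a
      · obtain ⟨g, hg : g • a = bᶜ⟩ := hb'
        rw [orbitConj_of_notMem z hb, one_mul, ← hg, orbitConj_smul_self hz,
          ← Set.subset_smul_set_iff, ← Set.compl_subset_compl, ← Set.smul_set_compl, ← hg]
        exact conj_smul_subset g
      · rw [orbitConj_of_notMem z hb, orbitConj_of_notMem z hb', inv_one, mul_one, one_smul]

theorem smul_eq_of_mem_stabCentralizer (hG : CoHopfian G) (ha : a ∈ T.halfspaces)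
    (hz : z ∈ stabCentralizer G a) (hza : z • a ⊆ a) : z • a = a := by
  have hζ := T.isTwisting_orbitConj ha hz hza
  have hself : orbitConj z a a = z := by simpa using orbitConj_smul_self hz 1
  have hcompl : aᶜ ∉ orbit G a := fun ⟨g, hg⟩ ↦ T.smul_ne_compl g ha hg
  simpa [hself, orbitConj_of_notMem z hcompl] using hζ.smul_eq_of_coHopfian hG ha

theorem smul_eq_of_mem_stabCentralizer_of_subset_smul (hG : CoHopfian G) (ha : a ∈ T.halfspaces)
    (hz : z ∈ stabCentralizer G a) (hza : a ⊆ z • a) : z • a = a := by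
  rw [Set.subset_smul_set_iff] at hza
  exact (inv_smul_eq_iff.1 (T.smul_eq_of_mem_stabCentralizer hG ha (inv_mem hz) hza)).symm

theorem smul_eq_of_mem_normalizer (hG : CoHopfian G) (ha : a ∈ T.halfspaces)
    [Finite (stabilizer G a)] (hz : z ∈ Subgroup.normalizer (stabilizer G a : Set G))
    (hza : z • a ⊆ a) : z • a = a := by
  obtain ⟨n, hn, hzn⟩ := exists_pow_mem_centralizer _ hz
  have hpow : z ^ n • a = a := T.smul_eq_of_mem_stabCentralizer hG ha hzn (pow_smul_le hza n)
  refine hza.antisymm ?_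
  calc a = z • z ^ (n - 1) • a := by rw [← mul_smul, mul_pow_sub_one hn.ne', hpow]
    _ ⊆ z • a := Set.smul_set_mono (pow_smul_le hza (n - 1))

/-- A halfspace is rooted if some element centralizing its stabilizer moves it off itself. -/
def IsRooted (G : Type*) {V : Type*} [Group G] [MulAction G V] (a : Set V) : Prop :=
  ∃ z ∈ stabCentralizer G a, z • a ⊆ aᶜ

theorem IsRooted.smul (h : IsRooted G a) (g : G) : IsRooted G (g • a) := by
  obtain ⟨z, hz, hza⟩ := h
  refine ⟨g * z * g⁻¹, conj_mem_stabCentralizer g hz, ?_⟩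
  rw [← mul_smul, inv_mul_cancel_right, mul_smul, ← Set.smul_set_compl]
  exact Set.smul_set_mono hza

theorem not_isRooted_compl (hG : CoHopfian G) (ha : a ∈ T.halfspaces) (h : IsRooted G a) :
    ¬ IsRooted G aᶜ := by
  rintro ⟨w, hw, hwa⟩
  obtain ⟨z, hz, hza⟩ := h
  rw [stabCentralizer_compl] at hw
  rw [_root_.compl_compl] at hwa
  have hwza : (w * z) • a ⊆ w • aᶜ := by
    rw [mul_smul]
    exact Set.smul_set_mono hza
  have heq := T.smul_eq_of_mem_stabCentralizer hG ha (mul_mem hw hz) (hwza.trans hwa)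
  have hwc : w • aᶜ = a := hwa.antisymm (by rwa [heq] at hwza)
  apply T.smul_ne_compl w⁻¹ ha
  rw [inv_smul_eq_iff, hwc]

/-- `a` and `b` are halfspaces of edges that are translates of each other up to orientation. -/
def SameEdgeOrbit (G : Type*) {V : Type*} [Group G] [MulAction G V] (a b : Set V) : Prop :=
  ∃ g : G, g • a = b ∨ g • a = bᶜ

namespace SameEdgeOrbit

theorem refl (a : Set V) : SameEdgeOrbit G a a := ⟨1, Or.inl (one_smul G a)⟩

theorem smul (g : G) (a : Set V) : SameEdgeOrbit G a (g • a) := ⟨g, Or.inl rfl⟩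

theorem compl (a : Set V) : SameEdgeOrbit G a aᶜ :=
  ⟨1, Or.inr (by rw [one_smul, _root_.compl_compl])⟩

theorem symm (h : SameEdgeOrbit G a b) : SameEdgeOrbit G b a := by
  obtain ⟨g, rfl | h⟩ := h
  · exact ⟨g⁻¹, Or.inl (inv_smul_smul g a)⟩
  · refine ⟨g⁻¹, Or.inr ?_⟩
    rw [inv_smul_eq_iff, Set.smul_set_compl, h, _root_.compl_compl]

theorem trans (h : SameEdgeOrbit G a b) (h' : SameEdgeOrbit G b d) : SameEdgeOrbit G a d := by
  obtain ⟨g, h⟩ := h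
  obtain ⟨k, h'⟩ := h'
  refine ⟨k * g, ?_⟩
  rw [mul_smul]
  rcases h with h | h <;> rw [h]
  · exact h'
  · rw [Set.smul_set_compl, compl_inj_iff, compl_eq_comm]
    exact h'.symm.imp Eq.symm id

theorem card_stabilizer_eq (h : SameEdgeOrbit G a b) :
    Nat.card (stabilizer G a) = Nat.card (stabilizer G b) := by
  obtain ⟨g, h⟩ := h
  rw [← card_stabilizer_smul g]
  rcases h with h | h
  · rw [h]
  · rw [h, stabilizer_compl]

theorem mem_halfspaces (h : SameEdgeOrbit G a b) (ha : a ∈ T.halfspaces) : b ∈ T.halfspaces := by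
  obtain ⟨g, h⟩ := h
  rcases h with rfl | h
  · exact T.smul_mem g ha
  · rw [← _root_.compl_compl b, ← h]
    exact T.compl_mem (T.smul_mem g ha)

theorem exists_smul_eq_of_isRooted (h : SameEdgeOrbit G a b) (hG : CoHopfian G)
    (ha : a ∈ T.halfspaces) (hra : IsRooted G a) (hrb : IsRooted G b) : ∃ g : G, g • a = b := by
  obtain ⟨g, h⟩ := h
  refine ⟨g, h.resolve_right fun hg ↦ ?_⟩
  refine T.not_isRooted_compl hG (T.smul_mem g ha) (hra.smul g) ?_
  rwa [hg, _root_.compl_compl]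

end SameEdgeOrbit

/-- The `G`-invariant strict order used to select image edges: `b` outranks `e` if its
stabilizer is larger, or if rooted halfspaces of edges in their orbits are strictly nested with
equal stabilizers. -/
def Outranks (G : Type*) {V : Type*} [Group G] [MulAction G V] (b e : Set V) : Prop :=
  Nat.card (stabilizer G e) < Nat.card (stabilizer G b) ∨
    ∃ a d, SameEdgeOrbit G a e ∧ SameEdgeOrbit G d b ∧ IsRooted G a ∧ IsRooted G d ∧ a ⊂ d ∧
      stabilizer G a = stabilizer G d

namespace Outranks

theorem congr {b' e' : Set V} (h : Outranks G b e) (hb : SameEdgeOrbit G b b')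
    (he : SameEdgeOrbit G e e') : Outranks G b' e' := by
  rcases h with h | ⟨a, d, ha, hd, h⟩
  · exact Or.inl (by rwa [← hb.card_stabilizer_eq, ← he.card_stabilizer_eq])
  · exact Or.inr ⟨a, d, ha.trans he, hd.trans hb, h⟩

theorem card_le (h : Outranks G b e) :
    Nat.card (stabilizer G e) ≤ Nat.card (stabilizer G b) := by
  rcases h with h | ⟨a, d, ha, hd, -, -, -, had⟩
  · exact h.le
  · rw [← ha.card_stabilizer_eq, ← hd.card_stabilizer_eq, had]

theorem trans (h : Outranks G b e) (h' : Outranks G e d) (hG : CoHopfian G)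
    (he : e ∈ T.halfspaces) : Outranks G b d := by
  rcases h with h | ⟨a₁, d₁, ha₁, hd₁, hra₁, hrd₁, hsub₁, hst₁⟩
  · exact Or.inl (h'.card_le.trans_lt h)
  rcases h' with h' | ⟨a₂, d₂, ha₂, hd₂, hra₂, hrd₂, hsub₂, hst₂⟩
  · refine Or.inl (h'.trans_le ?_)
    rw [← ha₁.card_stabilizer_eq, ← hd₁.card_stabilizer_eq, hst₁]
  obtain ⟨g, rfl⟩ := (hd₂.trans ha₁.symm).exists_smul_eq_of_isRooted hG
    (hd₂.symm.mem_halfspaces he) hrd₂ hra₁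
  exact Or.inr ⟨g • a₂, d₁, (SameEdgeOrbit.smul g a₂).symm.trans ha₂, hd₁, hra₂.smul g, hrd₁,
    (Set.smul_set_mono hsub₂.1).trans_ssubset hsub₁, (stabilizer_smul_congr g hst₂).trans hst₁⟩

theorem irrefl (hG : CoHopfian G) (hb : b ∈ T.halfspaces) [Finite (stabilizer G b)] :
    ¬ Outranks G b b := by
  rintro (h | ⟨a, d, ha, hd, hra, hrd, hsub, hst⟩)
  · exact h.false
  have hdH := hd.symm.mem_halfspaces hb
  obtain ⟨g, rfl⟩ := (hd.trans ha.symm).exists_smul_eq_of_isRooted hG hdH hrd hra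
  have : Finite (stabilizer G d) :=
    Nat.finite_of_card_ne_zero (hd.card_stabilizer_eq ▸ Nat.card_pos.ne')
  exact hsub.ne (T.smul_eq_of_mem_normalizer hG hdH (mem_normalizer_stabilizer_iff.2 hst) hsub.le)

end Outranks

theorem IsEdge.stabilizer_le_left (h : T.IsEdge x y a) : stabilizer G a ≤ stabilizer G x :=
  fun _ hg ↦ h.smul_left_eq hg

section FiniteStabilizers

variable [∀ x : V, Finite (stabilizer G x)]

theorem finite_stabilizer (ha : a ∈ T.halfspaces) : Finite (stabilizer G a) := by
  obtain ⟨x, y, h⟩ := T.exists_isEdge ha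
  exact Finite.of_injective _ (Subgroup.inclusion_injective h.stabilizer_le_left)

theorem stabilizer_inf_le_of_separates (hb : b ∈ T.halfspaces) (hu : u ∉ b) (hw : w ∈ b) :
    stabilizer G u ⊓ stabilizer G w ≤ stabilizer G b := by
  rintro g ⟨hgu : g • u = u, hgw : g • w = w⟩
  let g' : stabilizer G u := ⟨g, hgu⟩
  have hu' : u ∉ g • b := by rwa [← hgu, Set.smul_mem_smul_set_iff]
  have hw' : w ∈ g • b := by rwa [← hgw, Set.smul_mem_smul_set_iff]
  rcases T.nested (T.smul_mem g hb) hb with h | h | h | h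
  · exact smul_eq_of_smul_le (g := g') h
  · exact smul_eq_of_le_smul (g := g') h
  · exact absurd hw (h hw')
  · exact absurd (h hu) hu'

end FiniteStabilizers

end HalfspaceTree
end Rooted

section ImageEdge

open MulAction

variable {G V : Type*} [Group G] [MulAction G V]

namespace HalfspaceTree

variable {T : HalfspaceTree G V} {x y u v : V} {a b B B' : Set V} {g p q z : G}

theorem IsEdge.ssubset_of_smul_subset_compl (h : T.IsEdge x y a) (hza : z • a ⊆ aᶜ)
    (hb : b ∈ separating T.halfspaces x (z • y)) (hne : b ≠ z • a) : z • a ⊂ b ∧ a ⊂ bᶜ := by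
  obtain ⟨hbH, hxb, hzyb⟩ := hb
  have hy : y ∉ z • a := fun hy ↦ hza hy h.right_mem
  have hx : x ∉ z • a := fun hx ↦
    T.smul_ne_compl z h.mem (h.eq_compl_of_separates (T.smul_mem z h.mem) hx hy)
  have hzyza : z • y ∈ z • a := Set.smul_mem_smul_set h.right_mem
  have hzxb : z • x ∈ b := by
    by_contra hzxb
    exact hne ((h.smul z).eq_of_separates hbH hzxb hzyb)
  have hyb : y ∉ b := fun hyb ↦
    hza hzyza (h.eq_of_separates hbH hxb hyb ▸ hzyb)
  refine ⟨(Set.compl_subset_compl.1 <| (h.smul z).symm.subset_of_notMem (T.compl_mem hbH)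
    (not_not.2 hzyb) (not_not.2 hzxb) hx hxb).ssubset_of_ne hne.symm, ?_⟩
  refine Set.ssubset_iff_exists.2 ⟨Set.subset_compl_comm.1 <|
    h.symm.subset_of_notMem hbH hyb hxb (hza hzyza) hzyb, x, hxb, h.left_notMem⟩

theorem outranks_of_stabilizer_eq (hG : CoHopfian G) (ha : a ∈ T.halfspaces)
    (hb : b ∈ T.halfspaces) (hz : z ∈ stabCentralizer G a) (hza : z • a ⊂ b) (hab : a ⊂ bᶜ)
    (hst : stabilizer G a = stabilizer G b) : Outranks G b a := by
  have hzb : z⁻¹ ∈ stabCentralizer G b := stabCentralizer_congr hst ▸ inv_mem hz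
  have hza' : a ⊂ z⁻¹ • b := by
    refine ⟨Set.subset_smul_set_iff.2 (by rw [inv_inv]; exact hza.1), fun h ↦ hza.2 ?_⟩
    rwa [Set.smul_set_subset_iff_subset_inv_smul_set, inv_inv] at h
  have hra : IsRooted G a := ⟨z, hz, hza.1.trans (Set.subset_compl_comm.1 hab.1)⟩
  have hne : z⁻¹ • b ≠ b := by
    intro h
    obtain ⟨x, y, he⟩ := T.exists_isEdge ha
    exact hab.1 he.right_mem (h ▸ hza'.1 he.right_mem)
  rcases T.nested (T.smul_mem z⁻¹ hb) hb with h | h | h | h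
  · exact absurd (T.smul_eq_of_mem_stabCentralizer hG hb hzb h) hne
  · exact absurd (T.smul_eq_of_mem_stabCentralizer_of_subset_smul hG hb hzb h) hne
  · have hrb : IsRooted G b := ⟨z⁻¹, hzb, h⟩
    exact Or.inr ⟨a, z⁻¹ • b, SameEdgeOrbit.refl a, (SameEdgeOrbit.smul z⁻¹ b).symm, hra,
      hrb.smul z⁻¹, hza', hst.trans (stabilizer_smul_of_mem_stabCentralizer hzb).symm⟩
  · refine Or.inr ⟨a, bᶜ, SameEdgeOrbit.refl a, (SameEdgeOrbit.compl b).symm, hra,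
      ⟨z⁻¹, by rwa [stabCentralizer_compl], ?_⟩, hab, by rw [stabilizer_compl, hst]⟩
    rwa [_root_.compl_compl, Set.smul_set_compl, Set.compl_subset_comm]

/-- If the endpoints of the edge of `a` are moved to `u` and `v`, then `B` is the one edge of the
geodesic from `u` to `v` that does not outrank `a`. -/
def IsImageEdge (T : HalfspaceTree G V) (a : Set V) (u v : V) (B : Set V) : Prop :=
  B ∈ separating T.halfspaces u v ∧ ¬ Outranks G B a ∧
    ∀ b ∈ separating T.halfspaces u v, b = B ∨ Outranks G b a

theorem mem_separating_compl (hb : b ∈ separating T.halfspaces x y) :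
    bᶜ ∈ separating T.halfspaces y x :=
  ⟨T.compl_mem hb.1, not_not.2 hb.2.2, hb.2.1⟩

theorem mem_separating_smul (g : G) (hb : b ∈ separating T.halfspaces x y) :
    g • b ∈ separating T.halfspaces (g • x) (g • y) :=
  ⟨T.smul_mem g hb.1, by rw [Set.smul_mem_smul_set_iff]; exact hb.2.1,
    Set.smul_mem_smul_set hb.2.2⟩

namespace IsImageEdge

theorem unique (h : T.IsImageEdge a u v B) (h' : T.IsImageEdge a u v B') : B = B' :=
  (h'.2.2 B h.1).resolve_right h.2.1

theorem symm (h : T.IsImageEdge a u v B) : T.IsImageEdge aᶜ v u Bᶜ := by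
  refine ⟨mem_separating_compl h.1,
    fun h' ↦ h.2.1 (h'.congr (SameEdgeOrbit.compl B).symm (SameEdgeOrbit.compl a).symm),
    fun b hb ↦ (h.2.2 _ (mem_separating_compl hb)).imp ?_ fun h' ↦ ?_⟩
  · exact fun h' ↦ eq_compl_comm.1 h'.symm
  · exact h'.congr (SameEdgeOrbit.compl b).symm (SameEdgeOrbit.compl a)

theorem smul (h : T.IsImageEdge a u v B) (g k : G) :
    T.IsImageEdge (g • a) (k • u) (k • v) (k • B) := by
  refine ⟨mem_separating_smul k h.1,
    fun h' ↦ h.2.1 (h'.congr (SameEdgeOrbit.smul k B).symm (SameEdgeOrbit.smul g a).symm),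
    fun b hb ↦ ?_⟩
  have hb' : k⁻¹ • b ∈ separating T.halfspaces u v := by
    simpa using mem_separating_smul k⁻¹ hb
  exact (h.2.2 _ hb').imp inv_smul_eq_iff.1
    fun h' ↦ h'.congr (SameEdgeOrbit.smul k⁻¹ b).symm (SameEdgeOrbit.smul g a)

end IsImageEdge

section FiniteStabilizers

variable [∀ x : V, Finite (stabilizer G x)]

theorem not_outranks_smul_self (hG : CoHopfian G) (ha : a ∈ T.halfspaces) (g : G) :
    ¬ Outranks G (g • a) a := by
  have := T.finite_stabilizer ha
  exact fun h ↦ Outranks.irrefl hG ha (h.congr (SameEdgeOrbit.smul g a).symm (SameEdgeOrbit.refl a))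

theorem IsEdge.isImageEdge_of_smul_subset_compl (h : T.IsEdge x y a) (hG : CoHopfian G)
    (hz : z ∈ stabCentralizer G a) (hza : z • a ⊆ aᶜ) :
    T.IsImageEdge a x (z • y) (z • a) := by
  refine ⟨⟨T.smul_mem z h.mem, fun hx ↦ ?_, Set.smul_mem_smul_set h.right_mem⟩,
    T.not_outranks_smul_self hG h.mem z, fun b hb ↦ or_iff_not_imp_left.2 fun hne ↦ ?_⟩
  · exact T.smul_ne_compl z h.mem (h.eq_compl_of_separates (T.smul_mem z h.mem) hx
      fun hy ↦ hza hy h.right_mem)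
  · obtain ⟨hzab, hab⟩ := h.ssubset_of_smul_subset_compl hza hb hne
    have hst : stabilizer G a ≤ stabilizer G b := by
      refine fun c hc ↦ T.stabilizer_inf_le_of_separates hb.1 hb.2.1 hb.2.2
        ⟨h.smul_left_eq hc, ?_⟩
      change c • z • y = z • y
      rw [← mul_smul, mem_stabCentralizer_iff.1 hz c hc, mul_smul, h.smul_right_eq hc]
    have := T.finite_stabilizer hb.1
    rcases hst.eq_or_lt with hst | hst
    · exact T.outranks_of_stabilizer_eq hG h.mem hb.1 hz hzab hab hst
    · exact Or.inl (Set.Finite.card_lt_card (Set.toFinite _) hst)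

theorem IsEdge.isImageEdge_of_smul_eq (h : T.IsEdge x y a) (hG : CoHopfian G) (hza : z • a = a) :
    T.IsImageEdge a x (z • y) a := by
  rw [h.smul_right_eq hza]
  exact ⟨h.mem_separating, by simpa using T.not_outranks_smul_self hG h.mem 1,
    fun b hb ↦ Or.inl (h.eq_of_separates hb.1 hb.2.1 hb.2.2)⟩

theorem IsEdge.exists_isImageEdge (h : T.IsEdge x y a) (hG : CoHopfian G)
    (hz : z ∈ stabCentralizer G a) :
    T.IsImageEdge a x (z • y) a ∨ T.IsImageEdge a x (z • y) (z • a) := by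
  rcases T.nested (T.smul_mem z h.mem) h.mem with hza | hza | hza | hza
  · exact Or.inl (h.isImageEdge_of_smul_eq hG (T.smul_eq_of_mem_stabCentralizer hG h.mem hz hza))
  · exact Or.inl (h.isImageEdge_of_smul_eq hG
      (T.smul_eq_of_mem_stabCentralizer_of_subset_smul hG h.mem hz hza))
  · exact Or.inr (h.isImageEdge_of_smul_subset_compl hG hz hza)
  · have hza' : z⁻¹ • aᶜ ⊆ aᶜᶜ := by
      rwa [_root_.compl_compl, Set.smul_set_subset_iff_subset_inv_smul_set, inv_inv]
    have himg := h.symm.isImageEdge_of_smul_subset_compl hG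
      (by rw [stabCentralizer_compl]; exact inv_mem hz) hza'
    exact Or.inl (by simpa using (himg.smul 1 z).symm)

theorem IsEdge.exists_isImageEdge_smul (h : T.IsEdge x y a) (hG : CoHopfian G)
    (hpq : p⁻¹ * q ∈ stabCentralizer G a) :
    T.IsImageEdge a (p • x) (q • y) (p • a) ∨ T.IsImageEdge a (p • x) (q • y) (q • a) := by
  have hsmul (B : Set V) (hB : T.IsImageEdge a x ((p⁻¹ * q) • y) B) :
      T.IsImageEdge a (p • x) (q • y) (p • B) := by
    simpa [← mul_smul] using hB.smul 1 p
  exact (h.exists_isImageEdge hG hpq).imp (hsmul a)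
    fun hB ↦ by simpa [← mul_smul] using hsmul _ hB

end FiniteStabilizers

end HalfspaceTree
end ImageEdge

section Injectivity

open MulAction

variable {G V : Type*} [Group G] [MulAction G V]

theorem exists_equivariant_conjugators (φ : G →* G)
    (hφ : ∀ x : V, ∃ q : G, ∀ h ∈ stabilizer G x, φ h = q * h * q⁻¹) :
    ∃ P : V → G, ∀ (h : G) (x : V), P (h • x) = φ h * P x * h⁻¹ := by
  choose Q hQ using hφ
  let rep : V → V := fun x ↦ (Quotient.mk (orbitRel G V) x).out
  have hrep (x : V) : ∃ k : G, k • rep x = x :=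
    orbitRel_apply.1 ((orbitRel G V).symm (Quotient.mk_out (s := orbitRel G V) x))
  choose k hk using hrep
  have hrep_smul (h : G) (x : V) : rep (h • x) = rep x :=
    congrArg Quotient.out (Quotient.sound (s := orbitRel G V) (orbitRel_apply.2 (mem_orbit x h)))
  refine ⟨fun x ↦ φ (k x) * Q (rep x) * (k x)⁻¹, fun h x ↦ ?_⟩
  have hs : (k (h • x))⁻¹ * h * k x ∈ stabilizer G (rep x) := by
    have hkh := hk (h • x)
    rw [hrep_smul] at hkh
    rw [mem_stabilizer_iff, mul_smul, mul_smul, hk, inv_smul_eq_iff, hkh]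
  have hQs := hQ _ _ hs
  rw [map_mul, map_mul, map_inv] at hQs
  have hQs' : φ h * φ (k x) * Q (rep x)
      = φ (k (h • x)) * (Q (rep x) * ((k (h • x))⁻¹ * h * k x) * (Q (rep x))⁻¹) * Q (rep x) := by
    rw [← hQs]
    group
  simp only [hrep_smul]
  calc φ (k (h • x)) * Q (rep x) * (k (h • x))⁻¹
    _ = φ (k (h • x)) * (Q (rep x) * ((k (h • x))⁻¹ * h * k x) * (Q (rep x))⁻¹) * Q (rep x)
          * (k x)⁻¹ * h⁻¹ := by group
    _ = φ h * (φ (k x) * Q (rep x) * (k x)⁻¹) * h⁻¹ := by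
      rw [← hQs']
      group

namespace HalfspaceTree

/-- The geodesic from `x` to `y`, as a set of vertices. -/
def geodesic (T : HalfspaceTree G V) (x y : V) : Set V :=
  {z | ∀ b ∈ T.halfspaces, x ∈ b → y ∈ b → z ∈ b}

variable {T : HalfspaceTree G V} {x y o t o' t' u w : V} {a b : Set V} {g h k : G}

theorem geodesic_comm (x y : V) : T.geodesic x y = T.geodesic y x :=
  Set.ext fun _ ↦ forall₂_congr fun _ _ ↦ ⟨fun h hy hx ↦ h hx hy, fun h hx hy ↦ h hy hx⟩

theorem dist_comm (x y : V) : T.dist x y = T.dist y x := by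
  refine Set.ncard_congr (fun b _ ↦ bᶜ) (fun b hb ↦ mem_separating_compl hb)
    (fun b c _ _ h ↦ compl_injective h) fun b hb ↦ ⟨bᶜ, mem_separating_compl hb, ?_⟩
  exact _root_.compl_compl b

theorem separating_subset_of_mem_geodesic (hu : u ∈ T.geodesic x y) (hw : w ∈ T.geodesic u y) :
    separating T.halfspaces u w ⊆ separating T.halfspaces x y := by
  rintro b ⟨hb, hub, hwb⟩
  have hyb : y ∈ b := by
    by_contra hyb
    exact hw bᶜ (T.compl_mem hb) hub hyb hwb
  exact ⟨hb, fun hxb ↦ hub (hu b hb hxb hyb), hyb⟩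

theorem dist_lt_of_mem_geodesic (ha : a ∈ separating T.halfspaces x y) (hua : u ∈ a)
    (hu : u ∈ T.geodesic x y) (hw : w ∈ T.geodesic u y) : T.dist u w < T.dist x y :=
  Set.ncard_lt_ncard ⟨T.separating_subset_of_mem_geodesic hu hw, fun h ↦ (h ha).2.1 hua⟩
    (T.finite_separating x y)

theorem IsEdge.right_mem_geodesic (h : T.IsEdge o t a) (ha : a ∈ separating T.halfspaces x y) :
    t ∈ T.geodesic x y := by
  intro b hb hx hy
  by_contra htb
  by_cases hob : o ∈ b
  · exact (h.eq_compl_of_separates hb hob htb ▸ hy : y ∈ aᶜ) ha.2.2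
  · exact ha.2.1 (h.subset_of_notMem hb hob htb ha.2.2 hy hx)

theorem IsEdge.left_mem_geodesic (h : T.IsEdge o t a) (ha : a ∈ separating T.halfspaces x y) :
    o ∈ T.geodesic x y :=
  T.geodesic_comm x y ▸ h.symm.right_mem_geodesic (mem_separating_compl ha)

theorem exists_leaving_edge {Q : V → Prop} (hu : Q u) (hw : ¬ Q w) :
    ∃ o t a, T.IsEdge o t a ∧ a ∈ separating T.halfspaces u w ∧ Q o ∧ ¬ Q t := by
  induction hn : T.dist u w using Nat.strong_induction_on generalizing u with
  | _ n ih =>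
    have hne : u ≠ w := by
      rintro rfl
      exact hw hu
    obtain ⟨u', b, hb, hwb⟩ := T.exists_first_edge hne
    have hbsep : b ∈ separating T.halfspaces u w := ⟨hb.mem, hb.left_notMem, hwb⟩
    by_cases hu' : Q u'
    · obtain ⟨o, t, a, ha, hsep, hot⟩ := ih _ (hn ▸ hb.dist_lt hwb) hu' rfl
      have hw' : w ∈ T.geodesic u' w := fun _ _ _ ↦ id
      exact ⟨o, t, a, ha,
        T.separating_subset_of_mem_geodesic (hb.right_mem_geodesic hbsep) hw' hsep, hot⟩
    · exact ⟨u, u', b, hb, hbsep, hu, hu'⟩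

section EquivariantMap

variable {φ : G →* G} {P : V → G}

theorem eq_one_of_map_eq_one (hP : ∀ (h : G) (x : V), P (h • x) = φ h * P x * h⁻¹)
    (hk : k • x = x) (hφk : φ k = 1) : k = 1 := by
  have h := hP k x
  rwa [hk, hφk, one_mul, left_eq_mul, inv_eq_one] at h

theorem map_eq_conj (hP : ∀ (h : G) (x : V), P (h • x) = φ h * P x * h⁻¹)
    (hk : k • x = x) : φ k = P x * k * (P x)⁻¹ := by
  have h := hP k x
  rw [hk, eq_mul_inv_iff_mul_eq] at h
  rw [h, mul_inv_cancel_right]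

theorem smul_conjugator_smul (hP : ∀ (h : G) (x : V), P (h • x) = φ h * P x * h⁻¹) (h : G) (x : V) :
    P (h • x) • h • x = φ h • P x • x := by
  rw [hP, mul_smul, mul_smul, inv_smul_smul]

theorem IsEdge.exists_isImageEdge_conj [∀ x : V, Finite (stabilizer G x)]
    (he : T.IsEdge x y a) (hG : CoHopfian G)
    (hP : ∀ (h : G) (x : V), P (h • x) = φ h * P x * h⁻¹) :
    ∃ g : G, T.IsImageEdge a (P x • x) (P y • y) (g • a) ∧
      ∀ c ∈ stabilizer G a, φ c = g * c * g⁻¹ := by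
  have hx (c : G) (hc : c ∈ stabilizer G a) : φ c = P x * c * (P x)⁻¹ :=
    map_eq_conj hP (he.smul_left_eq hc)
  have hy (c : G) (hc : c ∈ stabilizer G a) : φ c = P y * c * (P y)⁻¹ :=
    map_eq_conj hP (he.smul_right_eq hc)
  have hxy : (P x)⁻¹ * P y ∈ stabCentralizer G a := by
    refine mem_stabCentralizer_iff.2 fun c hc ↦ ?_
    have h : P x * c * (P x)⁻¹ = P y * c * (P y)⁻¹ := (hx c hc).symm.trans (hy c hc)
    calc c * ((P x)⁻¹ * P y) = (P x)⁻¹ * (P x * c * (P x)⁻¹) * P y := by group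
      _ = (P x)⁻¹ * P y * c := by rw [h]; group
  rcases he.exists_isImageEdge_smul hG hxy with h | h
  · exact ⟨P x, h, hx⟩
  · exact ⟨P y, h, hy⟩

theorem exists_smul_eq_of_isImageEdge_compl (hP : ∀ (h : G) (x : V), P (h • x) = φ h * P x * h⁻¹)
    (he : T.IsEdge o t a) (he' : T.IsEdge o' t' b)
    (ha : T.IsImageEdge a (P o • o) (P t • t) (g • a))
    (hb : T.IsImageEdge b (P o' • o') (P t' • t') (h • b)) (hgh : h • b = (g • a)ᶜ)
    (hg : ∀ c ∈ stabilizer G a, φ c = g * c * g⁻¹) :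
    ∃ k : G, φ k = 1 ∧ k • o = t' ∧ k • t = o' := by
  obtain ⟨f, hf⟩ : ∃ f, f = h⁻¹ * g := ⟨_, rfl⟩
  have hfa : f • a = bᶜ := by
    rw [hf, mul_smul, inv_smul_eq_iff, Set.smul_set_compl, hgh, _root_.compl_compl]
  have hfe := he.smul f
  rw [hfa] at hfe
  have hfo : f • o = t' := hfe.left_unique he'.symm
  have hft : f • t = o' := hfe.right_unique he'.symm
  have hfimg := ha.smul f (φ f)
  rw [hfa, ← smul_conjugator_smul hP, ← smul_conjugator_smul hP, hfo, hft] at hfimg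
  have hfga : φ f • g • a = g • a := by
    rw [hfimg.unique hb.symm, hgh, _root_.compl_compl]
  have hc : g⁻¹ * φ f * g ∈ stabilizer G a := by
    rw [mem_stabilizer_iff, mul_smul, mul_smul, hfga, inv_smul_smul]
  have hφc : φ (g⁻¹ * φ f * g) = φ f := by
    rw [hg _ hc]
    group
  refine ⟨f * (g⁻¹ * φ f * g)⁻¹, by rw [map_mul, map_inv, hφc, mul_inv_cancel], ?_, ?_⟩
  · rw [mul_smul, inv_smul_eq_iff.2 (he.smul_left_eq hc).symm, hfo]
  · rw [mul_smul, inv_smul_eq_iff.2 (he.smul_right_eq hc).symm, hft]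

variable [∀ x : V, Finite (stabilizer G x)]

theorem exists_not_outranks (hG : CoHopfian G) (hne : x ≠ y) :
    ∃ a ∈ separating T.halfspaces x y, ∀ b ∈ separating T.halfspaces x y, ¬ Outranks G a b := by
  let r (a b : separating T.halfspaces x y) : Prop := Outranks G (b : Set V) a
  have : Finite (separating T.halfspaces x y) := T.finite_separating x y
  have : IsTrans _ r := ⟨fun _ b _ hab hbc ↦ hbc.trans hab hG b.2.1⟩
  have : Std.Irrefl r := ⟨fun a ↦ by simpa using T.not_outranks_smul_self hG a.2.1 1⟩
  obtain ⟨a, -, ha⟩ := (Finite.wellFounded_of_trans_of_irrefl r).has_min Set.univ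
    ((T.separating_nonempty hne).to_subtype.elim fun a ↦ ⟨a, trivial⟩)
  exact ⟨a, a.2, fun b hb ↦ ha ⟨b, hb⟩ trivial⟩

/-- If the image of the path from `x` to `y` returns across the image of the edge of `a`, then it
does so along the image of an edge of that path, and the part in between is a shorter path whose
ends have the same image. -/
theorem exists_closer_of_isImageEdge (hG : CoHopfian G)
    (hP : ∀ (h : G) (x : V), P (h • x) = φ h * P x * h⁻¹) (he : T.IsEdge o t a)
    (hsep : a ∈ separating T.halfspaces x y)
    (hmax : ∀ b ∈ separating T.halfspaces x y, ¬ Outranks G a b)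
    (ha : T.IsImageEdge a (P o • o) (P t • t) (g • a))
    (hg : ∀ c ∈ stabilizer G a, φ c = g * c * g⁻¹) (hy : P y • y ∉ g • a) :
    ∃ u w, u ≠ w ∧ P u • u = P w • w ∧ T.dist u w < T.dist x y := by
  obtain ⟨o', t', b, he', hbsep, ho', ht'⟩ :=
    T.exists_leaving_edge (Q := fun v ↦ P v • v ∈ g • a) ha.1.2.2 hy
  have ht : t ∈ T.geodesic x y := he.right_mem_geodesic hsep
  have hbxy : b ∈ separating T.halfspaces x y :=
    T.separating_subset_of_mem_geodesic ht (fun _ _ _ ↦ id) hbsep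
  obtain ⟨h, hb, -⟩ := he'.exists_isImageEdge_conj hG hP
  have hhb : h • b = (g • a)ᶜ := by
    refine ((hb.2.2 _ ⟨T.compl_mem ha.1.1, not_not.2 ho', ht'⟩).resolve_right fun hout ↦ ?_).symm
    exact hmax b hbxy (hout.congr
      ((SameEdgeOrbit.smul g a).trans (SameEdgeOrbit.compl _)).symm (SameEdgeOrbit.refl b))
  obtain ⟨k, hk, hko, hkt⟩ := T.exists_smul_eq_of_isImageEdge_compl hP he he' ha hb hhb hg
  refine ⟨t, o', fun hto ↦ ?_, ?_, T.dist_lt_of_mem_geodesic hsep he.right_mem ht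
    (he'.left_mem_geodesic hbsep)⟩
  · have hk1 : k = 1 := eq_one_of_map_eq_one hP (hkt.trans hto.symm) hk
    rw [hk1, one_smul] at hko hkt
    subst hko hkt
    exact (he'.halfspace_unique he.symm ▸ hbsep.2.2 : y ∈ aᶜ) hsep.2.2
  · rw [← hkt, smul_conjugator_smul hP, hk, one_smul]

theorem injective_conjugator_smul (T : HalfspaceTree G V) (hG : CoHopfian G)
    (hP : ∀ (h : G) (x : V), P (h • x) = φ h * P x * h⁻¹) :
    Function.Injective fun x ↦ P x • x := by
  intro x y (hxy : P x • x = P y • y)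
  induction hn : T.dist x y using Nat.strong_induction_on generalizing x y with
  | _ n ih =>
    by_contra hne
    obtain ⟨a, hsep, hmax⟩ := T.exists_not_outranks hG hne
    obtain ⟨o, t, he⟩ := T.exists_isEdge hsep.1
    obtain ⟨g, ha, hg⟩ := he.exists_isImageEdge_conj hG hP
    obtain ⟨u, w, huw, hF, hlt⟩ :
        ∃ u w, u ≠ w ∧ P u • u = P w • w ∧ T.dist u w < T.dist x y := by
      by_cases hy : P y • y ∈ g • a
      · rw [T.dist_comm]
        refine T.exists_closer_of_isImageEdge hG hP he.symm (mem_separating_compl hsep)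
          (fun b hb hout ↦ hmax bᶜ (mem_separating_compl hb)
            (hout.congr (SameEdgeOrbit.compl a).symm (SameEdgeOrbit.compl b)))
          (g := g) (by rw [Set.smul_set_compl]; exact ha.symm)
          (by rwa [stabilizer_compl]) ?_
        rw [Set.smul_set_compl, hxy]
        exact not_not.2 hy
      · exact T.exists_closer_of_isImageEdge hG hP he hsep hmax ha hg hy
    exact huw (ih _ (hn ▸ hlt) hF rfl)

theorem injective_of_forall_stabilizer_conj (T : HalfspaceTree G V) [Nonempty V] (hG : CoHopfian G)
    (hφ : ∀ x : V, ∃ q : G, ∀ h ∈ stabilizer G x, φ h = q * h * q⁻¹) : Function.Injective φ := by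
  obtain ⟨P, hP⟩ := exists_equivariant_conjugators φ hφ
  obtain ⟨x⟩ := ‹Nonempty V›
  refine (injective_iff_map_eq_one φ).2 fun k hk ↦ eq_one_of_map_eq_one hP (x := x) ?_ hk
  apply T.injective_conjugator_smul hG hP
  change P (k • x) • k • x = P x • x
  rw [smul_conjugator_smul hP, hk, one_smul]

end EquivariantMap

end HalfspaceTree
end Injectivity

section Cuts

variable {X : Type*}

/-- The edge boundary of a set of vertices: the edges with one endpoint inside and one outside. -/
def boundary (Γ : SimpleGraph X) (A : Set X) : Set (Sym2 X) :=
  {e ∈ Γ.edgeSet | (∃ x ∈ e, x ∈ A) ∧ ∃ y ∈ e, y ∉ A}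

/-- The number of boundary edges of a cut. It is `0` when the boundary is infinite, so it is only
meaningful for cuts with finite boundary. -/
noncomputable def cutSize (Γ : SimpleGraph X) (A : Set X) : ℕ :=
  (boundary Γ A).ncard

/-- `A` separates the ultrafilters `α` and `β`, which play the role of ends of a graph; the sides
of the cut are not ordered. -/
def Separates (α β : Ultrafilter X) (A : Set X) : Prop :=
  A ∈ α ↔ A ∉ β

/-- `A` has least weight `w` among the cuts with finite boundary that separate `α` from `β`. -/
structure IsMinimalCut {W : Type*} [LE W] (Γ : SimpleGraph X) (w : Set X → W)
    (α β : Ultrafilter X) (A : Set X) : Prop where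
  separates : Separates α β A
  finite : (boundary Γ A).Finite
  le {B : Set X} : Separates α β B → (boundary Γ B).Finite → w A ≤ w B

/-- The cuts with at most `K` boundary edges that are of minimal size for some pair of ends. -/
def minCuts (Γ : SimpleGraph X) (K : ℕ) : Set (Set X) :=
  {A | cutSize Γ A ≤ K ∧ ∃ α β, IsMinimalCut Γ (cutSize Γ) α β A}

/-- Two cuts cross when all four of their corners are nonempty. -/
def Crosses (A B : Set X) : Prop :=
  ((A ∩ B).Nonempty ∧ (A ∩ Bᶜ).Nonempty) ∧ (Aᶜ ∩ B).Nonempty ∧ (Aᶜ ∩ Bᶜ).Nonempty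

/-- The minimal cuts that cross `A`. -/
def crossings (Γ : SimpleGraph X) (K : ℕ) (A : Set X) : Set (Set X) :=
  {D ∈ minCuts Γ K | Crosses A D}

/-- Cuts are compared by size first, and then by the number of minimal cuts they cross. -/
noncomputable def cutWeight (Γ : SimpleGraph X) (K : ℕ) (A : Set X) : ℕ ×ₗ ℕ :=
  toLex (cutSize Γ A, (crossings Γ K A).ncard)

/-- The cuts with at most `K` boundary edges that are of minimal weight for some pair of ends. -/
def optimalCuts (Γ : SimpleGraph X) (K : ℕ) : Set (Set X) :=
  {A | cutSize Γ A ≤ K ∧ ∃ α β, IsMinimalCut Γ (cutWeight Γ K) α β A}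

variable {Γ : SimpleGraph X} {K : ℕ} {A B D : Set X} {α β γ δ : Ultrafilter X} {x y : X}

theorem mk_mem_boundary : s(x, y) ∈ boundary Γ A ↔ Γ.Adj x y ∧ (x ∈ A ↔ y ∉ A) := by
  simp only [boundary, Set.mem_ofPred_eq, SimpleGraph.mem_edgeSet, Sym2.mem_iff, exists_eq_or_imp,
    exists_eq_left]
  tauto

theorem boundary_compl : boundary Γ Aᶜ = boundary Γ A := by
  ext ⟨x, y⟩
  simp only [mk_mem_boundary, Set.mem_compl_iff]
  tauto

theorem cutSize_compl : cutSize Γ Aᶜ = cutSize Γ A := by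
  rw [cutSize, boundary_compl, cutSize]

theorem boundary_inter_union_subset :
    boundary Γ (A ∩ B) ∪ boundary Γ (A ∪ B) ⊆ boundary Γ A ∪ boundary Γ B := by
  rintro ⟨x, y⟩
  simp only [Set.mem_union, mk_mem_boundary, Set.mem_inter_iff]
  tauto

theorem boundary_inter_inter_boundary_union_subset :
    boundary Γ (A ∩ B) ∩ boundary Γ (A ∪ B) ⊆ boundary Γ A ∩ boundary Γ B := by
  rintro ⟨x, y⟩
  simp only [Set.mem_union, mk_mem_boundary, Set.mem_inter_iff]
  tauto

theorem boundary_inter_finite (hA : (boundary Γ A).Finite) (hB : (boundary Γ B).Finite) :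
    (boundary Γ (A ∩ B)).Finite :=
  (hA.union hB).subset (Set.subset_union_left.trans boundary_inter_union_subset)

theorem boundary_union_finite (hA : (boundary Γ A).Finite) (hB : (boundary Γ B).Finite) :
    (boundary Γ (A ∪ B)).Finite :=
  (hA.union hB).subset (Set.subset_union_right.trans boundary_inter_union_subset)

theorem exists_mem_boundary_of_reachable (h : Γ.Reachable x y) (hx : x ∈ A) (hy : y ∉ A) :
    ∃ u ∈ A, ∃ v ∉ A, s(u, v) ∈ boundary Γ A := by
  obtain ⟨p⟩ := h
  obtain ⟨d, -, hd, hd'⟩ := p.exists_boundary_dart A hx hy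
  exact ⟨d.fst, hd, d.snd, hd', mk_mem_boundary.2 ⟨d.adj, by simp [hd, hd']⟩⟩

theorem reachable_of_preconnected_induce (h : (Γ.induce D).Preconnected) (hx : x ∈ D)
    (hy : y ∈ D) : Γ.Reachable x y :=
  (h ⟨x, hx⟩ ⟨y, hy⟩).map (SimpleGraph.Embedding.induce D).toHom

theorem exists_mem_of_not_preconnected_induce (h : ¬ (Γ.induce A).Preconnected) :
    ∃ C ⊆ A, C.Nonempty ∧ (A \ C).Nonempty ∧ ∀ u ∈ C, ∀ v ∈ A \ C, ¬ Γ.Adj u v := by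
  simp only [SimpleGraph.Preconnected, not_forall] at h
  obtain ⟨x, y, hxy⟩ := h
  refine ⟨Subtype.val '' {u | (Γ.induce A).Reachable x u}, by simp, ⟨x, x, .refl x, rfl⟩,
    ⟨y, y.2, ?_⟩, ?_⟩
  · rintro ⟨z, hz, hzy⟩
    exact hxy (Subtype.ext hzy ▸ hz)
  · rintro _ ⟨u, hu, rfl⟩ v ⟨hvA, hv⟩ huv
    have hadj : (Γ.induce A).Adj u ⟨v, hvA⟩ := huv
    exact hv ⟨⟨v, hvA⟩, hu.trans hadj.reachable, rfl⟩

theorem boundary_subset_of_not_adj {C : Set X} (hC : C ⊆ A)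
    (h : ∀ u ∈ C, ∀ v ∈ A \ C, ¬ Γ.Adj u v) : boundary Γ C ⊆ boundary Γ A := by
  rintro ⟨u, v⟩ he
  simp only [mk_mem_boundary] at he ⊢
  have huv := fun hu hv ↦ h u hu v hv he.1
  have hvu := fun hv hu ↦ h v hv u hu he.1.symm
  have hCu := @hC u
  have hCv := @hC v
  simp only [Set.mem_sdiff] at huv hvu
  tauto

theorem separates_compl : Separates α β Aᶜ ↔ Separates α β A := by
  simp only [Separates, Ultrafilter.compl_mem_iff_notMem]
  tauto

theorem Separates.or_sdiff {C : Set X} (h : Separates α β A) (hC : C ⊆ A) :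
    Separates α β C ∨ Separates α β (A \ C) := by
  have hα := fun hα : C ∈ α ↦ Filter.mem_of_superset hα hC
  have hβ := fun hβ : C ∈ β ↦ Filter.mem_of_superset hβ hC
  simp only [Separates, Set.sdiff_eq, ← Ultrafilter.mem_coe, Filter.inter_mem_iff] at h hα hβ ⊢
  simp only [Ultrafilter.mem_coe, Ultrafilter.compl_mem_iff_notMem] at h hα hβ ⊢
  tauto

theorem Separates.nonempty (h : Separates α β A) : A.Nonempty := by
  rw [Set.nonempty_iff_ne_empty]
  rintro rfl
  simp [Separates] at h

namespace IsMinimalCut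

variable {W : Type*} {w : Set X → W}

theorem compl [LE W] (hw : ∀ C, w Cᶜ = w C) (h : IsMinimalCut Γ w α β A) :
    IsMinimalCut Γ w α β Aᶜ :=
  ⟨separates_compl.2 h.separates, boundary_compl.symm ▸ h.finite, fun hB hf ↦ hw A ▸ h.le hB hf⟩

theorem exists_of_separates [LinearOrder W] [WellFoundedLT W] (w : Set X → W)
    (h : Separates α β A) (hf : (boundary Γ A).Finite) : ∃ B, IsMinimalCut Γ w α β B := by
  obtain ⟨B, hB, hmin⟩ := (InvImage.wf w (wellFounded_lt (α := W))).has_min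
    {B | Separates α β B ∧ (boundary Γ B).Finite} ⟨A, h, hf⟩
  exact ⟨B, hB.1, hB.2, fun hC hCf ↦ not_lt.1 (hmin _ ⟨hC, hCf⟩)⟩

theorem cutSize_of_cutWeight (h : IsMinimalCut Γ (cutWeight Γ K) α β A) :
    IsMinimalCut Γ (cutSize Γ) α β A :=
  ⟨h.separates, h.finite, fun hB hf ↦ Prod.Lex.monotone_fst _ _ (h.le hB hf)⟩

/-- A piece `C` of a disconnected minimal cut that still separates the two ends would have the
whole boundary of the cut, leaving no boundary edge for the other piece. -/
theorem not_separates_of_not_adj (hΓ : Γ.Preconnected) {C : Set X}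
    (h : IsMinimalCut Γ (cutSize Γ) α β A) (hC : C ⊆ A) (hne : (A \ C).Nonempty)
    (hadj : ∀ u ∈ C, ∀ v ∈ A \ C, ¬ Γ.Adj u v) : ¬ Separates α β C := by
  intro hsep
  have hsub := boundary_subset_of_not_adj hC hadj
  have heq := Set.eq_of_subset_of_ncard_le hsub (h.le hsep (h.finite.subset hsub)) h.finite
  obtain ⟨x, hx⟩ := hne
  obtain ⟨y, hy⟩ := hsep.nonempty
  obtain ⟨u, hu, v, -, huv⟩ := exists_mem_boundary_of_reachable (A := A \ C) (hΓ x y) hx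
    fun h ↦ h.2 hy
  have huvA : s(u, v) ∈ boundary Γ A := by
    refine boundary_subset_of_not_adj Set.sdiff_subset (fun s hs t ht ↦ ?_) huv
    rw [Set.sdiff_sdiff_cancel_left hC] at ht
    exact fun hst ↦ hadj t ht s hs hst.symm
  have hvA := (mk_mem_boundary.1 huvA).2.1 hu.1
  rw [← heq, mk_mem_boundary] at huvA
  exact hu.2 (huvA.2.2 fun hvC ↦ hvA (hC hvC))

theorem preconnected_induce (hΓ : Γ.Preconnected) (h : IsMinimalCut Γ (cutSize Γ) α β A) :
    (Γ.induce A).Preconnected := by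
  by_contra hcon
  obtain ⟨C, hC, hne, hne', hadj⟩ := exists_mem_of_not_preconnected_induce hcon
  rcases h.separates.or_sdiff hC with hsep | hsep
  · exact h.not_separates_of_not_adj hΓ hC hne' hadj hsep
  · rw [← Set.sdiff_sdiff_cancel_left hC] at hne
    refine h.not_separates_of_not_adj hΓ Set.sdiff_subset hne (fun u hu v hv huv ↦ ?_) hsep
    rw [Set.sdiff_sdiff_cancel_left hC] at hv
    exact hadj v hv u hu huv.symm

end IsMinimalCut

theorem preconnected_induce_deleteEdges {e : Sym2 X} (he : e ∈ boundary Γ D)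
    (h : (Γ.induce D).Preconnected) : ((Γ.deleteEdges {e}).induce D).Preconnected := by
  convert h using 1
  ext u v
  simp only [SimpleGraph.comap_adj, SimpleGraph.deleteEdges_adj, Set.mem_singleton_iff,
    and_iff_left_iff_imp]
  rintro - rfl
  exact (mk_mem_boundary.1 he).2.1 u.2 v.2

theorem boundary_deleteEdges (s : Set (Sym2 X)) :
    boundary (Γ.deleteEdges s) A = boundary Γ A \ s := by
  ext ⟨x, y⟩
  simp only [Set.mem_sdiff, mk_mem_boundary, SimpleGraph.deleteEdges_adj]
  tauto

theorem eq_setOf_reachable (hxy : ¬ Γ.Reachable x y) (hD : (Γ.induce D).Preconnected)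
    (hDc : (Γ.induce Dᶜ).Preconnected) (hx : x ∈ D) (hy : y ∉ D) : D = {u | Γ.Reachable x u} := by
  ext u
  refine ⟨fun hu ↦ reachable_of_preconnected_induce hD hx hu, fun hu ↦ ?_⟩
  by_contra huD
  exact hxy (hu.trans (reachable_of_preconnected_induce hDc huD hy))

/-- The induction on `k` deletes an edge of a fixed path from `x` to `y`. -/
theorem finite_setOf_preconnected_cuts (Γ : SimpleGraph X) (x y : X) (k : ℕ) :
    {D : Set X | (Γ.induce D).Preconnected ∧ (Γ.induce Dᶜ).Preconnected ∧ x ∈ D ∧ y ∉ D ∧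
      (boundary Γ D).Finite ∧ cutSize Γ D < k}.Finite := by
  induction k generalizing Γ with
  | zero => simp
  | succ k ih =>
    by_cases hxy : Γ.Reachable x y
    · obtain ⟨p⟩ := hxy
      refine (p.edges.finite_toSet.biUnion fun e _ ↦ ih (Γ.deleteEdges {e})).subset ?_
      rintro D ⟨hD, hDc, hx, hy, hf, hlt⟩
      obtain ⟨d, hd, hd₁, hd₂⟩ := p.exists_boundary_dart D hx hy
      have he : d.edge ∈ boundary Γ D := mk_mem_boundary.2 ⟨d.adj, by simp [hd₁, hd₂]⟩
      have hpos := (Set.ncard_pos hf).2 ⟨_, he⟩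
      refine Set.mem_biUnion (x := d.edge) (List.mem_map_of_mem hd)
        ⟨preconnected_induce_deleteEdges he hD,
          preconnected_induce_deleteEdges (boundary_compl.symm ▸ he) hDc, hx, hy, ?_⟩
      rw [cutSize] at hlt ⊢
      rw [boundary_deleteEdges, Set.ncard_sdiff_singleton_of_mem he]
      exact ⟨hf.sdiff, by omega⟩
    · refine (Set.finite_singleton {u | Γ.Reachable x u}).subset ?_
      rintro D ⟨hD, hDc, hx, hy, -⟩
      exact eq_setOf_reachable hxy hD hDc hx hy

theorem compl_mem_minCuts (h : A ∈ minCuts Γ K) : Aᶜ ∈ minCuts Γ K := by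
  obtain ⟨hK, α, β, h⟩ := h
  exact ⟨cutSize_compl.trans_le hK, α, β, h.compl fun _ ↦ cutSize_compl⟩

theorem preconnected_induce_of_mem_minCuts (hΓ : Γ.Preconnected) (h : A ∈ minCuts Γ K) :
    (Γ.induce A).Preconnected := by
  obtain ⟨-, α, β, h⟩ := h
  exact h.preconnected_induce hΓ

theorem finite_minCuts_separating (hΓ : Γ.Preconnected) (x y : X) :
    {D ∈ minCuts Γ K | x ∈ D ∧ y ∉ D}.Finite := by
  refine (finite_setOf_preconnected_cuts Γ x y (K + 1)).subset ?_
  rintro D ⟨hD, hx, hy⟩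
  refine ⟨preconnected_induce_of_mem_minCuts hΓ hD,
    preconnected_induce_of_mem_minCuts hΓ (compl_mem_minCuts hD), hx, hy, ?_⟩
  obtain ⟨hK, α, β, h⟩ := hD
  exact ⟨h.finite, Nat.lt_succ_of_le hK⟩

theorem crosses_compl_left : Crosses Aᶜ B ↔ Crosses A B := by
  rw [Crosses, Crosses, _root_.compl_compl, and_comm]

theorem crosses_comm : Crosses A B ↔ Crosses B A := by
  simp only [Crosses, Set.inter_comm]
  tauto

theorem crosses_compl_right : Crosses A Bᶜ ↔ Crosses A B := by
  rw [crosses_comm, crosses_compl_left, crosses_comm]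

theorem crossings_compl : crossings Γ K Aᶜ = crossings Γ K A := by
  simp only [crossings, crosses_compl_left]

theorem subset_or_compl_subset_of_not_crosses (h : ¬ Crosses A D) (hD : (A ∩ D).Nonempty)
    (hDc : (A ∩ Dᶜ).Nonempty) : D ⊆ A ∨ Dᶜ ⊆ A := by
  rw [Crosses, not_and, not_and_or, Set.not_nonempty_iff_eq_empty, Set.not_nonempty_iff_eq_empty,
    ← Set.disjoint_iff_inter_eq_empty, ← Set.disjoint_iff_inter_eq_empty,
    Set.disjoint_compl_left_iff_subset, Set.disjoint_compl_left_iff_subset] at h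
  exact h ⟨hD, hDc⟩

theorem Crosses.of_inter (h : Crosses (A ∩ B) D) (hAB : Crosses A B) :
    Crosses A D ∨ Crosses B D := by
  obtain ⟨⟨⟨x, hxAB, hx⟩, y, hyAB, hy⟩, ⟨s, hsAB, hs⟩, t, htAB, ht⟩ := h
  by_contra! hcon
  have hA := subset_or_compl_subset_of_not_crosses hcon.1 ⟨x, hxAB.1, hx⟩ ⟨y, hyAB.1, hy⟩
  have hB := subset_or_compl_subset_of_not_crosses hcon.2 ⟨x, hxAB.2, hx⟩ ⟨y, hyAB.2, hy⟩
  obtain ⟨-, -, w, hwA, hwB⟩ := hAB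
  rcases hA with hA | hA <;> rcases hB with hB | hB
  · exact hsAB ⟨hA hs, hB hs⟩
  · exact hwB (hB fun hw ↦ hwA (hA hw))
  · exact hwA (hA fun hw ↦ hwB (hB hw))
  · exact htAB ⟨hA ht, hB ht⟩

theorem Crosses.of_union (h : Crosses (A ∪ B) D) (hAB : Crosses A B) :
    Crosses A D ∨ Crosses B D := by
  rw [← crosses_compl_left, Set.compl_union] at h
  simpa only [crosses_compl_left] using
    h.of_inter (crosses_compl_left.2 (crosses_compl_right.2 hAB))

theorem exists_mem_of_mem_boundary (hD : (Γ.induce D).Preconnected) (h : (A ∩ D).Nonempty)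
    (h' : (Aᶜ ∩ D).Nonempty) : ∃ x ∈ D, ∃ e ∈ boundary Γ A, x ∈ e := by
  obtain ⟨x, hxA, hxD⟩ := h
  obtain ⟨y, hyA, hyD⟩ := h'
  obtain ⟨p⟩ := hD ⟨x, hxD⟩ ⟨y, hyD⟩
  obtain ⟨d, -, hd, hd'⟩ := p.exists_boundary_dart (Subtype.val ⁻¹' A) hxA hyA
  simp only [Set.mem_preimage] at hd hd'
  exact ⟨d.fst, d.fst.2, s(↑d.fst, ↑d.snd), mk_mem_boundary.2 ⟨d.adj, by simp [hd, hd']⟩,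
    Sym2.mem_mk_left _ _⟩

theorem finite_endpoints_boundary (hA : (boundary Γ A).Finite) :
    {x | ∃ e ∈ boundary Γ A, x ∈ e}.Finite := by
  have hfin (e : Sym2 X) : (e : Set X).Finite := by
    induction e with | _ x y => simp
  exact (hA.biUnion fun e _ ↦ hfin e).subset fun x ⟨e, he, hx⟩ ↦ Set.mem_biUnion he hx

theorem crossings_finite (hΓ : Γ.Preconnected) (hA : (boundary Γ A).Finite) :
    (crossings Γ K A).Finite := by
  have hends := finite_endpoints_boundary hA
  refine (hends.biUnion fun x _ ↦ hends.biUnion fun y _ ↦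
    finite_minCuts_separating (K := K) hΓ x y).subset ?_
  rintro D ⟨hD, ⟨hAD, hADc⟩, hAcD, hAcDc⟩
  obtain ⟨x, hxD, hx⟩ :=
    exists_mem_of_mem_boundary (preconnected_induce_of_mem_minCuts hΓ hD) hAD hAcD
  obtain ⟨y, hyD, hy⟩ := exists_mem_of_mem_boundary
    (preconnected_induce_of_mem_minCuts hΓ (compl_mem_minCuts hD)) hADc hAcDc
  exact Set.mem_biUnion hx (Set.mem_biUnion hy ⟨hD, hxD, hyD⟩)

theorem ncard_add_ncard_le {Y : Type*} {S T U V : Set Y} (hU : U.Finite) (hV : V.Finite)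
    (hunion : S ∪ T ⊆ U ∪ V) (hinter : S ∩ T ⊆ U ∩ V) :
    S.ncard + T.ncard ≤ U.ncard + V.ncard := by
  have hf := hU.union hV
  rw [← Set.ncard_union_add_ncard_inter S T (hf.subset (Set.subset_union_left.trans hunion))
    (hf.subset (Set.subset_union_right.trans hunion)),
    ← Set.ncard_union_add_ncard_inter U V hU hV]
  exact add_le_add (Set.ncard_le_ncard hunion hf) (Set.ncard_le_ncard hinter (hU.inter_of_left V))

theorem ncard_add_ncard_lt {Y : Type*} {S T U V : Set Y} (hU : U.Finite) (hV : V.Finite)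
    (hunion : S ∪ T ⊂ U ∪ V) (hinter : S ∩ T ⊆ U ∩ V) :
    S.ncard + T.ncard < U.ncard + V.ncard := by
  have hf := hU.union hV
  rw [← Set.ncard_union_add_ncard_inter S T (hf.subset (Set.subset_union_left.trans hunion.1))
    (hf.subset (Set.subset_union_right.trans hunion.1)),
    ← Set.ncard_union_add_ncard_inter U V hU hV]
  exact add_lt_add_of_lt_of_le (Set.ncard_lt_ncard hunion hf)
    (Set.ncard_le_ncard hinter (hU.inter_of_left V))

theorem cutSize_inter_add_union_le (hA : (boundary Γ A).Finite) (hB : (boundary Γ B).Finite) :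
    cutSize Γ (A ∩ B) + cutSize Γ (A ∪ B) ≤ cutSize Γ A + cutSize Γ B :=
  ncard_add_ncard_le hA hB boundary_inter_union_subset boundary_inter_inter_boundary_union_subset

theorem crossings_inter_union_ssubset (hA : A ∈ minCuts Γ K) (hAB : Crosses A B) :
    crossings Γ K (A ∩ B) ∪ crossings Γ K (A ∪ B) ⊂ crossings Γ K A ∪ crossings Γ K B := by
  refine (Set.ssubset_iff_of_subset ?_).2 ⟨A, Or.inr ⟨hA, crosses_comm.1 hAB⟩, ?_⟩
  · rintro D (⟨hD, h⟩ | ⟨hD, h⟩)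
    · exact (h.of_inter hAB).imp (⟨hD, ·⟩) (⟨hD, ·⟩)
    · exact (h.of_union hAB).imp (⟨hD, ·⟩) (⟨hD, ·⟩)
  · rintro (⟨-, ⟨-, x, hx, hxA⟩, -⟩ | ⟨-, -, ⟨x, hx, hxA⟩, -⟩)
    · exact hxA hx.1
    · exact hx (Or.inl hxA)

theorem crossings_inter_inter_union_subset :
    crossings Γ K (A ∩ B) ∩ crossings Γ K (A ∪ B) ⊆ crossings Γ K A ∩ crossings Γ K B := by
  rintro D ⟨⟨hD, ⟨⟨x, hx, hxD⟩, y, hy, hyD⟩, -⟩, -, -, ⟨s, hs, hsD⟩, t, ht, htD⟩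
  simp only [Set.compl_union] at hs ht
  exact ⟨⟨hD, ⟨⟨x, hx.1, hxD⟩, y, hy.1, hyD⟩, ⟨s, hs.1, hsD⟩, t, ht.1, htD⟩,
    ⟨hD, ⟨⟨x, hx.2, hxD⟩, y, hy.2, hyD⟩, ⟨s, hs.2, hsD⟩, t, ht.2, htD⟩⟩

theorem cutWeight_inter_add_union_lt (hΓ : Γ.Preconnected) (hA : (boundary Γ A).Finite)
    (hB : (boundary Γ B).Finite) (hmin : A ∈ minCuts Γ K) (hAB : Crosses A B) :
    cutWeight Γ K (A ∩ B) + cutWeight Γ K (A ∪ B) < cutWeight Γ K A + cutWeight Γ K B := by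
  refine Prod.Lex.toLex_strictMono (Prod.mk_lt_mk.2 (Or.inr
    ⟨cutSize_inter_add_union_le hA hB, ?_⟩))
  exact ncard_add_ncard_lt (crossings_finite hΓ hA) (crossings_finite hΓ hB)
    (crossings_inter_union_ssubset hmin hAB) crossings_inter_inter_union_subset

theorem cutWeight_compl : cutWeight Γ K Aᶜ = cutWeight Γ K A := by
  rw [cutWeight, cutSize_compl, crossings_compl, cutWeight]

theorem compl_mem_optimalCuts (h : A ∈ optimalCuts Γ K) : Aᶜ ∈ optimalCuts Γ K := by
  obtain ⟨hK, α, β, h⟩ := h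
  exact ⟨cutSize_compl.trans_le hK, α, β, h.compl fun _ ↦ cutWeight_compl⟩

theorem optimalCuts_subset_minCuts : optimalCuts Γ K ⊆ minCuts Γ K := by
  rintro A ⟨hK, α, β, h⟩
  exact ⟨hK, α, β, h.cutSize_of_cutWeight⟩

theorem boundary_finite_of_mem_optimalCuts (h : A ∈ optimalCuts Γ K) : (boundary Γ A).Finite := by
  obtain ⟨-, α, β, h⟩ := h
  exact h.finite

/-- Up to replacing `B` by its complement, some corner separates the first pair of ends and the
opposite corner separates one of the two pairs. -/
theorem exists_opposite_corners (hA : Separates α β A) (hB : Separates γ δ B) :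
    ∃ C, (C = B ∨ C = Bᶜ) ∧
      (Separates α β (A ∩ C) ∧ (Separates α β (A ∪ C) ∨ Separates γ δ (A ∪ C)) ∨
        Separates α β (A ∪ C) ∧ (Separates α β (A ∩ C) ∨ Separates γ δ (A ∩ C))) := by
  simp only [or_and_right, exists_or, exists_eq_left]
  simp only [Separates, ← Ultrafilter.mem_coe, Filter.inter_mem_iff] at hA hB ⊢
  simp only [Ultrafilter.mem_coe, Ultrafilter.compl_mem_iff_notMem,
    Ultrafilter.union_mem_iff] at hA hB ⊢
  by_cases A ∈ α <;> by_cases B ∈ α <;> by_cases B ∈ β <;>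
    by_cases B ∈ γ <;> by_cases A ∈ γ <;> by_cases A ∈ δ <;> simp_all

/-- If two optimal cuts crossed, uncrossing them into a suitable pair of opposite corners would
contradict the strict submodularity of the weight. -/
theorem not_crosses_of_mem_optimalCuts (hΓ : Γ.Preconnected) (hA : A ∈ optimalCuts Γ K)
    (hB : B ∈ optimalCuts Γ K) : ¬ Crosses A B := by
  intro hAB
  wlog hle : cutWeight Γ K B ≤ cutWeight Γ K A generalizing A B
  · exact this hB hA (crosses_comm.1 hAB) (le_of_not_ge hle)
  have hmin := optimalCuts_subset_minCuts hA
  obtain ⟨-, α, β, hA⟩ := hA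
  obtain ⟨-, γ, δ, hB⟩ := hB
  obtain ⟨C, hCB, hsep⟩ := exists_opposite_corners hA.separates hB.separates
  obtain ⟨hw, hf, hAC⟩ : cutWeight Γ K C = cutWeight Γ K B ∧ (boundary Γ C).Finite ∧
      Crosses A C := by
    rcases hCB with rfl | rfl
    · exact ⟨rfl, hB.finite, hAB⟩
    · exact ⟨cutWeight_compl, boundary_compl.symm ▸ hB.finite, crosses_compl_right.2 hAB⟩
  have hlt := hw ▸ cutWeight_inter_add_union_lt hΓ hA.finite hf hmin hAC
  have hweight {E : Set X} (hEf : (boundary Γ E).Finite)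
      (hE : Separates α β E ∨ Separates γ δ E) : cutWeight Γ K B ≤ cutWeight Γ K E :=
    hE.elim (fun h ↦ hle.trans (hA.le h hEf)) fun h ↦ hB.le h hEf
  have hinter := boundary_inter_finite hA.finite hf
  have hunion := boundary_union_finite hA.finite hf
  rcases hsep with ⟨hα, hor⟩ | ⟨hα, hor⟩
  · exact (add_le_add (hA.le hα hinter) (hweight hunion hor)).not_gt hlt
  · rw [add_comm (cutWeight Γ K (A ∩ C))] at hlt
    exact (add_le_add (hA.le hα hunion) (hweight hinter hor)).not_gt hlt

theorem exists_mem_optimalCuts_of_separates (h : Separates α β A) (hf : (boundary Γ A).Finite)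
    (hK : cutSize Γ A ≤ K) : ∃ B ∈ optimalCuts Γ K, Separates α β B := by
  obtain ⟨B, hB⟩ := IsMinimalCut.exists_of_separates (cutWeight Γ K) h hf
  exact ⟨B, ⟨(hB.cutSize_of_cutWeight.le h hf).trans hK, α, β, hB⟩, hB.separates⟩

theorem nonempty_of_mem_optimalCuts (h : A ∈ optimalCuts Γ K) : A.Nonempty := by
  obtain ⟨-, α, β, h⟩ := h
  exact h.separates.nonempty

theorem boundary_image (φ : Γ ≃g Γ) : boundary Γ (φ '' A) = Sym2.map φ '' boundary Γ A := by
  ext e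
  induction e with | _ x y
  obtain ⟨x, rfl⟩ := φ.surjective x
  obtain ⟨y, rfl⟩ := φ.surjective y
  rw [← Sym2.map_mk, (Sym2.map.injective φ.injective).mem_set_image]
  simp only [Sym2.map_mk, mk_mem_boundary, φ.map_adj_iff, φ.injective.mem_set_image]

theorem boundary_image_finite (φ : Γ ≃g Γ) :
    (boundary Γ (φ '' A)).Finite ↔ (boundary Γ A).Finite := by
  rw [boundary_image, Set.finite_image_iff (Sym2.map.injective φ.injective).injOn]

theorem cutSize_image (φ : Γ ≃g Γ) : cutSize Γ (φ '' A) = cutSize Γ A := by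
  rw [cutSize, boundary_image, Set.ncard_image_of_injective _ (Sym2.map.injective φ.injective),
    cutSize]

theorem separates_map_image (φ : Γ ≃g Γ) :
    Separates (α.map φ) (β.map φ) (φ '' A) ↔ Separates α β A := by
  simp only [Separates, Ultrafilter.mem_map, Set.preimage_image_eq A φ.injective]

theorem IsMinimalCut.image {W : Type*} [LE W] {w : Set X → W} (φ : Γ ≃g Γ)
    (hw : ∀ C, w (φ '' C) = w C) (h : IsMinimalCut Γ w α β A) :
    IsMinimalCut Γ w (α.map φ) (β.map φ) (φ '' A) := by
  refine ⟨(separates_map_image φ).2 h.separates, (boundary_image_finite φ).2 h.finite,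
    fun {B} hB hf ↦ ?_⟩
  obtain ⟨B, rfl⟩ := φ.surjective.image_surjective B
  rw [hw, hw]
  exact h.le ((separates_map_image φ).1 hB) ((boundary_image_finite φ).1 hf)

theorem image_mem_minCuts (φ : Γ ≃g Γ) (h : A ∈ minCuts Γ K) : φ '' A ∈ minCuts Γ K := by
  obtain ⟨hK, α, β, h⟩ := h
  exact ⟨(cutSize_image φ).trans_le hK, _, _, h.image φ fun _ ↦ cutSize_image φ⟩

theorem image_mem_minCuts_iff (φ : Γ ≃g Γ) : φ '' A ∈ minCuts Γ K ↔ A ∈ minCuts Γ K := by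
  refine ⟨fun h ↦ ?_, image_mem_minCuts φ⟩
  simpa [Set.image_image] using image_mem_minCuts φ.symm h

theorem crosses_image (φ : Γ ≃g Γ) : Crosses (φ '' A) (φ '' B) ↔ Crosses A B := by
  simp only [Crosses, ← Set.image_compl_eq φ.bijective, ← Set.image_inter φ.injective,
    Set.image_nonempty]

theorem crossings_image (φ : Γ ≃g Γ) :
    crossings Γ K (φ '' A) = Set.image φ '' crossings Γ K A := by
  ext D
  obtain ⟨D, rfl⟩ := φ.surjective.image_surjective D
  rw [φ.injective.image_injective.mem_set_image]
  simp only [crossings, Set.mem_ofPred_eq, image_mem_minCuts_iff, crosses_image]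

theorem cutWeight_image (φ : Γ ≃g Γ) : cutWeight Γ K (φ '' A) = cutWeight Γ K A := by
  rw [cutWeight, cutSize_image, crossings_image,
    Set.ncard_image_of_injective _ φ.injective.image_injective, cutWeight]

theorem image_mem_optimalCuts (φ : Γ ≃g Γ) (h : A ∈ optimalCuts Γ K) :
    φ '' A ∈ optimalCuts Γ K := by
  obtain ⟨hK, α, β, h⟩ := h
  exact ⟨(cutSize_image φ).trans_le hK, _, _, h.image φ fun _ ↦ cutWeight_image φ⟩

end Cuts

section CayleyGraph

open SimpleGraph Filter

variable {G : Type*} [Group G] {S A : Set G} {c g : G} {K : ℕ}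

/-- The elements of `G` whose right translation changes the membership in `A` of only finitely
many elements; `A` is almost invariant when this is the whole of `G`. -/
def almostStabilizer (A : Set G) : Subgroup G where
  carrier := {g | {x | ¬ (x ∈ A ↔ x * g ∈ A)}.Finite}
  one_mem' := by simp
  mul_mem' {g h} hg hh := by
    refine (hg.union (hh.preimage (mul_left_injective g).injOn)).subset fun x hx ↦ ?_
    simp only [Set.mem_union, Set.mem_preimage, Set.mem_ofPred_eq, mul_assoc] at hx ⊢
    tauto
  inv_mem' {g} hg := by
    refine (hg.preimage (mul_left_injective g⁻¹).injOn).subset fun x hx ↦ ?_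
    simpa [iff_comm] using hx

theorem mem_almostStabilizer : g ∈ almostStabilizer A ↔ {x | ¬ (x ∈ A ↔ x * g ∈ A)}.Finite :=
  Iff.rfl

theorem almostStabilizer_eq_top (hS : Subgroup.closure S = ⊤)
    (hA : (boundary (mulCayley S) A).Finite) : almostStabilizer A = ⊤ := by
  rw [eq_top_iff, ← hS, Subgroup.closure_le]
  intro s hs
  refine (finite_endpoints_boundary hA).subset fun x hx ↦ ⟨s(x, x * s), ?_, Sym2.mem_mk_left _ _⟩
  have hxs : x ≠ x * s := fun h ↦ hx (by rw [← h])
  refine mk_mem_boundary.2 ⟨(mulCayley_adj S _ _).2 ⟨hxs, Or.inl (by simpa using hs)⟩, ?_⟩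
  simp only [Set.mem_ofPred_eq] at hx
  tauto

theorem boundary_mulCayley_finite (hS : S.Finite) (hA : almostStabilizer A = ⊤) :
    (boundary (mulCayley S) A).Finite := by
  have hfin := hS.biUnion fun s _ ↦
    (mem_almostStabilizer.1 (hA ▸ Subgroup.mem_top s)).image fun x ↦ s(x, x * s)
  refine hfin.subset ?_
  rintro ⟨x, y⟩ he
  rw [mk_mem_boundary, mulCayley_adj] at he
  obtain ⟨⟨-, hs | hs⟩, hxy⟩ := he
  · refine Set.mem_biUnion hs ⟨x, ?_, by simp⟩
    simp [hxy]
  · refine Set.mem_biUnion hs ⟨y, ?_, by simp [Sym2.eq_swap]⟩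
    simp [hxy]

/-- Left translation as an automorphism of the Cayley graph. -/
def mulCayleyMulLeft (S : Set G) (g : G) : mulCayley S ≃g mulCayley S where
  toEquiv := Equiv.mulLeft g
  map_rel_iff' := mulCayley_adj_mul_iff_right

theorem preconnected_mulCayley (hS : Subgroup.closure S = ⊤) : (mulCayley S).Preconnected := by
  have htrans {x y : G} (g : G) (h : (mulCayley S).Reachable x y) :
      (mulCayley S).Reachable (g * x) (g * y) :=
    h.map (mulCayleyMulLeft S g).toHom
  have hreach (g : G) : (mulCayley S).Reachable 1 g := by
    have hg : g ∈ Subgroup.closure S := hS ▸ Subgroup.mem_top g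
    induction hg using Subgroup.closure_induction with
    | mem s hs =>
      by_cases h1 : 1 = s
      · rw [← h1]
      · exact Adj.reachable ((mulCayley_adj S _ _).2 ⟨h1, Or.inl (by simpa using hs)⟩)
    | one => rfl
    | mul x y _ _ hx hy => simpa using hx.trans (by simpa using htrans x hy)
    | inv x _ hx => simpa using (htrans x⁻¹ hx).symm
  exact fun x y ↦ (hreach x).symm.trans (hreach y)

theorem smul_mem_optimalCuts (g : G) (h : A ∈ optimalCuts (mulCayley S) K) :
    g • A ∈ optimalCuts (mulCayley S) K :=
  image_mem_optimalCuts (mulCayleyMulLeft S g) h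

/-- An ultrafilter to which the positive powers of `c` converge: when `c` has infinite order, it
stands for the attracting end of `c`. -/
noncomputable def attractingEnd (c : G) : Ultrafilter G :=
  (Ultrafilter.of (atTop : Filter ℕ)).map (c ^ ·)

theorem mem_attractingEnd_of_eventually (h : ∀ᶠ n : ℕ in atTop, c ^ n ∈ A) :
    A ∈ attractingEnd c :=
  Ultrafilter.of_le _ h

theorem notMem_attractingEnd_of_eventually (h : ∀ᶠ n : ℕ in atTop, c ^ n ∉ A) :
    A ∉ attractingEnd c :=
  Ultrafilter.compl_mem_iff_notMem.1 (mem_attractingEnd_of_eventually h)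

theorem eventually_pow_mem (hA : almostStabilizer A = ⊤) (hc : ¬ IsOfFinOrder c)
    (h : A ∈ attractingEnd c) : ∀ᶠ n : ℕ in atTop, c ^ n ∈ A := by
  have hfin : {n : ℕ | ¬ (c ^ n ∈ A ↔ c ^ n * c ∈ A)}.Finite :=
    (mem_almostStabilizer.1 (hA ▸ Subgroup.mem_top c)).preimage
      (injective_pow_iff_not_isOfFinOrder.2 hc).injOn
  obtain ⟨N, hN⟩ := hfin.bddAbove
  have hsucc (n : ℕ) (hn : N < n) : c ^ n ∈ A ↔ c ^ (n + 1) ∈ A := by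
    rw [pow_succ]
    exact not_not.1 fun h ↦ hn.not_ge (hN h)
  have hN' : {n | N < n} ∈ Ultrafilter.of atTop := Ultrafilter.of_le _ (eventually_gt_atTop N)
  obtain ⟨m, hm, hNm⟩ := Ultrafilter.nonempty_of_mem (inter_mem (Ultrafilter.mem_map.1 h) hN')
  filter_upwards [eventually_ge_atTop m] with n hn
  induction n, hn using Nat.le_induction with
  | base => exact hm
  | succ n hn ih => exact (hsucc n (hNm.trans_le hn)).1 ih

theorem eventually_pow_notMem (hA : almostStabilizer A = ⊤) (hc : ¬ IsOfFinOrder c)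
    (h : A ∉ attractingEnd c) : ∀ᶠ n : ℕ in atTop, c ^ n ∉ A := by
  have hAc : almostStabilizer Aᶜ = ⊤ := by simpa [almostStabilizer, not_iff_not] using hA
  exact eventually_pow_mem hAc hc (Ultrafilter.compl_mem_iff_notMem.2 h)

theorem not_isOfFinOrder_of_eventually (hp : ∀ᶠ n : ℕ in atTop, c ^ n ∈ A)
    (hm : ∀ᶠ n : ℕ in atTop, c⁻¹ ^ n ∉ A) : ¬ IsOfFinOrder c := by
  rw [isOfFinOrder_iff_pow_eq_one]
  rintro ⟨m, hm0, hcm⟩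
  have hmul : Tendsto (m * ·) atTop (atTop : Filter ℕ) := tendsto_id.const_mul_atTop' hm0
  obtain ⟨n, hn, hn'⟩ := ((hmul.eventually hp).and (hmul.eventually hm)).exists
  simp only [pow_mul, hcm, inv_pow, one_pow, inv_one] at hn hn'
  exact hn' hn

theorem smul_ssubset_or_ssubset_smul (hc : ¬ Crosses A (c • A))
    (hp : ∀ᶠ n : ℕ in atTop, c ^ n ∈ A) (hm : ∀ᶠ n : ℕ in atTop, c⁻¹ ^ n ∉ A) :
    c • A ⊂ A ∨ A ⊂ c • A := by
  have hp' : ∀ᶠ n : ℕ in atTop, c ^ n ∈ c • A := by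
    filter_upwards [(tendsto_sub_atTop_nat 1).eventually hp, eventually_gt_atTop 0] with n hn hn0
    rwa [← Nat.sub_add_cancel hn0, pow_succ', ← smul_eq_mul, Set.smul_mem_smul_set_iff]
  have hm' : ∀ᶠ n : ℕ in atTop, c⁻¹ ^ n ∉ c • A := by
    filter_upwards [(tendsto_add_atTop_nat 1).eventually hm] with n hn
    rwa [Set.mem_smul_set_iff_inv_smul_mem, smul_eq_mul, ← pow_succ']
  obtain ⟨n, hn, hn'⟩ := (hp.and hp').exists
  obtain ⟨m, hm, hm'⟩ := (hm.and hm').exists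
  have hne : c • A ≠ A := fun h ↦ by
    have hstab : c⁻¹ ^ (n + m) ∈ MulAction.stabilizer G A := pow_mem (inv_mem h) _
    have : c⁻¹ ^ (n + m) • c ^ n ∈ c⁻¹ ^ (n + m) • A := Set.smul_mem_smul_set hn
    rw [MulAction.mem_stabilizer_iff.1 hstab, add_comm, pow_add, smul_eq_mul, inv_pow c n,
      inv_mul_cancel_right] at this
    exact hm this
  have hsub : c • A ⊆ A ∨ A ⊆ c • A := by
    by_contra! h
    obtain ⟨⟨x, hx, hx'⟩, y, hy, hy'⟩ := h.imp Set.not_subset.1 Set.not_subset.1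
    exact hc ⟨⟨⟨_, hn, hn'⟩, ⟨y, hy, hy'⟩⟩, ⟨x, hx', hx⟩, ⟨_, hm, hm'⟩⟩
  exact hsub.imp (fun h ↦ h.ssubset_of_ne hne) fun h ↦ h.ssubset_of_ne hne.symm

/-- `c` translates one of the optimal cuts of the Cayley graph strictly into itself, up to
orientation: it acts as a hyperbolic element on the tree dual to these cuts. -/
def IsHyperbolic (S : Set G) (K : ℕ) (c : G) : Prop :=
  ∃ A ∈ optimalCuts (mulCayley S) K, c • A ⊂ A ∨ A ⊂ c • A

theorem IsHyperbolic.conj (h : IsHyperbolic S K c) (k : G) : IsHyperbolic S K (k * c * k⁻¹) := by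
  obtain ⟨A, hA, h⟩ := h
  have hk : (k * c * k⁻¹) • k • A = k • c • A := by simp [smul_smul]
  refine ⟨k • A, smul_mem_optimalCuts k hA, ?_⟩
  simpa only [hk, ssubset_iff_subset_not_subset, Set.smul_set_subset_smul_set_iff] using h

theorem isHyperbolic_of_eventually (hSc : Subgroup.closure S = ⊤)
    (hA : (boundary (mulCayley S) A).Finite) (hK : cutSize (mulCayley S) A ≤ K)
    (hp : ∀ᶠ n : ℕ in atTop, c ^ n ∈ A) (hm : ∀ᶠ n : ℕ in atTop, c⁻¹ ^ n ∉ A) :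
    IsHyperbolic S K c := by
  have hc := not_isOfFinOrder_of_eventually hp hm
  have hc' : ¬ IsOfFinOrder c⁻¹ := by rwa [isOfFinOrder_inv_iff]
  have hsep : Separates (attractingEnd c) (attractingEnd c⁻¹) A :=
    iff_of_true (mem_attractingEnd_of_eventually hp) (notMem_attractingEnd_of_eventually hm)
  obtain ⟨B, hB, hsepB⟩ := exists_mem_optimalCuts_of_separates hsep hA hK
  have hcompl := compl_mem_optimalCuts hB
  have hinv := almostStabilizer_eq_top hSc (boundary_finite_of_mem_optimalCuts hB)
  have hnc {D : Set G} (hD : D ∈ optimalCuts (mulCayley S) K) : ¬ Crosses D (c • D) :=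
    not_crosses_of_mem_optimalCuts (preconnected_mulCayley hSc) hD (smul_mem_optimalCuts c hD)
  by_cases h : B ∈ attractingEnd c
  · exact ⟨B, hB, smul_ssubset_or_ssubset_smul (hnc hB) (eventually_pow_mem hinv hc h)
      (eventually_pow_notMem hinv hc' (hsepB.1 h))⟩
  · refine ⟨Bᶜ, hcompl, smul_ssubset_or_ssubset_smul (hnc hcompl)
      (eventually_pow_notMem hinv hc h) ?_⟩
    simpa using eventually_pow_mem hinv hc' (not_not.1 (mt hsepB.2 h))

end CayleyGraph

section FreeGroup

variable {ι : Type*}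

theorem finite_of_fg_freeGroup [Group.FG (FreeGroup ι)] : Finite ι := by
  have : Group.FG (Abelianization (FreeGroup ι)) := QuotientGroup.fg _
  have : Module.Finite ℤ (FreeAbelianGroup ι) := Module.Finite.iff_addGroup_fg.2
    (inferInstanceAs (AddGroup.FG (Additive (Abelianization (FreeGroup ι)))))
  exact Module.Finite.finite_basis (FreeAbelianGroup.basis ι)

variable [DecidableEq ι]

/-- The elements of a free group whose reduced word starts with the letter `a`. -/
def startingWith (a : ι × Bool) : Set (FreeGroup ι) :=
  {w | w.toWord.head? = some a}

theorem head?_toWord_mul_of {w : FreeGroup ι} {i : ι} (hw : w ≠ 1) (hwi : w * FreeGroup.of i ≠ 1) :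
    (w * FreeGroup.of i).toWord.head? = w.toWord.head? := by
  obtain hnil | ⟨L, b, hL⟩ := w.toWord.eq_nil_or_concat'
  · exact absurd (FreeGroup.toWord_eq_nil_iff.1 hnil) hw
  have hred : FreeGroup.IsReduced (L ++ [b]) := hL ▸ FreeGroup.isReduced_toWord
  by_cases hb : b = (i, false)
  · have hinv : FreeGroup.mk [(i, false)] = (FreeGroup.of i)⁻¹ := rfl
    have hwL : w * FreeGroup.of i = FreeGroup.mk L := by
      rw [← FreeGroup.mk_toWord (x := w), hL, hb, ← FreeGroup.mul_mk, hinv, inv_mul_cancel_right]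
    have hLnil : L ≠ [] := by
      rintro rfl
      exact hwi hwL
    have hredL : FreeGroup.IsReduced L := List.IsChain.left_of_append hred
    rw [hwL, hL, FreeGroup.toWord_mk, hredL.reduce_eq, List.head?_append_of_ne_nil _ hLnil]
  · have hred' : FreeGroup.IsReduced (L ++ [b] ++ [(i, true)]) := by
      refine List.isChain_append.2 ⟨hred, List.isChain_singleton _, ?_⟩
      obtain ⟨j, c⟩ := b
      simp only [List.getLast?_concat, List.head?_cons, Option.mem_some_iff]
      rintro _ rfl _ rfl rfl
      simpa using hb
    rw [FreeGroup.toWord_mul, FreeGroup.toWord_of, hL, hred'.reduce_eq,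
      List.head?_append_of_ne_nil _ (by simp)]

theorem almostStabilizer_startingWith (a : ι × Bool) : almostStabilizer (startingWith a) = ⊤ := by
  rw [eq_top_iff, ← FreeGroup.closure_range_of, Subgroup.closure_le]
  rintro _ ⟨i, rfl⟩
  refine (Set.toFinite {1, (FreeGroup.of i)⁻¹}).subset fun w hw ↦ ?_
  by_contra! h
  simp only [Set.mem_insert_iff, Set.mem_singleton_iff, not_or, eq_inv_iff_mul_eq_one] at h
  exact hw (by simp only [startingWith, Set.mem_ofPred_eq, head?_toWord_mul_of h.1 h.2])

theorem exists_conj_pow_mem_startingWith {u : FreeGroup ι} (hu : u ≠ 1) :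
    ∃ (k v : FreeGroup ι) (a : ι × Bool), u = k * v * k⁻¹ ∧
      ∀ n : ℕ, n ≠ 0 → v ^ n ∈ startingWith a ∧ v⁻¹ ^ n ∉ startingWith a := by
  have hcyc := FreeGroup.reduceCyclically.isCyclicallyReduced (FreeGroup.isReduced_toWord (x := u))
  have hconj := FreeGroup.reduceCyclically.conj_conjugator_reduceCyclically u.toWord
  set L := FreeGroup.reduceCyclically u.toWord
  set k := FreeGroup.reduceCyclically.conjugator u.toWord
  have hu' : u = FreeGroup.mk k * FreeGroup.mk L * (FreeGroup.mk k)⁻¹ := by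
    rw [FreeGroup.inv_mk, FreeGroup.mul_mk, FreeGroup.mul_mk, hconj, FreeGroup.mk_toWord]
  have hL : L ≠ [] := fun h ↦ hu (by
    rw [hu', h, ← FreeGroup.one_eq_mk, mul_one, mul_inv_cancel])
  have hpow (n : ℕ) : (FreeGroup.mk L ^ n).toWord = (List.replicate n L).flatten := by
    rw [FreeGroup.toWord_pow, FreeGroup.toWord_mk, hcyc.isReduced.reduce_eq,
      (hcyc.flatten_replicate n).isReduced.reduce_eq]
  refine ⟨FreeGroup.mk k, FreeGroup.mk L, L.head hL, hu', fun n hn ↦ ⟨?_, fun h ↦ ?_⟩⟩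
  · rw [startingWith, Set.mem_ofPred_eq, hpow, List.head?_flatten_replicate (h := hn),
      List.head?_eq_some_head hL]
  · rw [startingWith, Set.mem_ofPred_eq, inv_pow, FreeGroup.toWord_inv, hpow, FreeGroup.invRev,
      List.head?_reverse, List.getLast?_map, List.getLast?_flatten_replicate (h := hn),
      List.getLast?_eq_some_getLast hL, Option.map_some, Option.some.injEq] at h
    have := hcyc.2 _ (List.getLast?_eq_some_getLast hL) _ (List.head?_eq_some_head hL)
    simp [← h] at this

end FreeGroup

section Transversal

open SimpleGraph Filter

variable {G F : Type*} [Group G] [Group F] {H : Subgroup G} {T : Set G}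

theorem almostStabilizer_preimage_equiv (hT : Subgroup.IsComplement (H : Set G) T)
    (hTf : T.Finite) (e : H ≃* F) {A : Set F} (hA : almostStabilizer A = ⊤) :
    almostStabilizer ((fun x ↦ e (hT.equiv x).1) ⁻¹' A) = ⊤ := by
  rw [eq_top_iff]
  intro g _
  have hfin := hTf.biUnion fun t _ ↦ (mem_almostStabilizer.1
    (hA ▸ Subgroup.mem_top (e (hT.equiv (t * g)).1))).image fun w ↦ (e.symm w : G) * t
  refine hfin.subset fun x hx ↦ Set.mem_biUnion (hT.equiv x).2.2 ⟨e (hT.equiv x).1, ?_, ?_⟩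
  swap
  · simp [hT.equiv_fst_mul_equiv_snd]
  have hxg : (hT.equiv (x * g)).1 = (hT.equiv x).1 * (hT.equiv ((hT.equiv x).2 * g)).1 := by
    conv_lhs => rw [← hT.equiv_fst_mul_equiv_snd x, mul_assoc, hT.equiv_mul_left]
  rwa [Set.mem_ofPred_eq, Set.mem_preimage, Set.mem_preimage, hxg, map_mul] at hx

theorem exists_forall_isHyperbolic {S : Set G} (hS : S.Finite) (hSc : Subgroup.closure S = ⊤)
    [H.FiniteIndex] {ι : Type*} [Finite ι] (e : H ≃* FreeGroup ι) :
    ∃ K, ∀ g ∈ H, g ≠ 1 → IsHyperbolic S K g := by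
  classical
  obtain ⟨T, hT, hT1⟩ := H.exists_isComplement_right 1
  set r : G → FreeGroup ι := fun x ↦ e (hT.equiv x).1
  have hr (h : H) : r h = e h := by
    exact congrArg e (hT.equiv_fst_eq_self_of_mem_of_one_mem hT1 h.2)
  have hfin (a : ι × Bool) : (boundary (mulCayley S) (r ⁻¹' startingWith a)).Finite :=
    boundary_mulCayley_finite hS
      (almostStabilizer_preimage_equiv hT hT.finite_right e (almostStabilizer_startingWith a))
  obtain ⟨K, hK⟩ := (Set.finite_range fun a : ι × Bool ↦
    cutSize (mulCayley S) (r ⁻¹' startingWith a)).bddAbove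
  refine ⟨K, fun g hg hg1 ↦ ?_⟩
  obtain ⟨k, v, a, hkv, hv⟩ :=
    exists_conj_pow_mem_startingWith (u := e ⟨g, hg⟩) (by simpa using hg1)
  have hg' : g = (e.symm k : G) * e.symm v * (e.symm k : G)⁻¹ := by
    have := congrArg Subtype.val ((e.eq_symm_apply).2 hkv)
    simpa using this
  have hpow (w : FreeGroup ι) (n : ℕ) : r ((e.symm w : G) ^ n) = w ^ n := by
    rw [← Subgroup.coe_pow, hr, map_pow, e.apply_symm_apply]
  rw [hg']
  refine (isHyperbolic_of_eventually hSc (hfin a) (hK ⟨a, rfl⟩) ?_ ?_).conj _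
  · filter_upwards [eventually_ne_atTop 0] with n hn
    rw [Set.mem_preimage, hpow]
    exact (hv n hn).1
  · filter_upwards [eventually_ne_atTop 0] with n hn
    rw [← Subgroup.coe_inv, ← map_inv, Set.mem_preimage, hpow]
    exact (hv n hn).2

end Transversal

section DualTree

theorem finite_of_disjoint_finiteIndex {G : Type*} [Group G] {H K : Subgroup G} [H.FiniteIndex]
    (h : Disjoint H K) : Finite K := by
  refine Nat.finite_of_card_ne_zero ?_
  rw [← Subgroup.index_bot, ← Subgroup.subgroupOf_eq_bot.2 h]
  exact Subgroup.FiniteIndex.index_ne_zero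

/-- A `G`-invariant family of cuts of `X` that is closed under complements, in which no two cuts
cross, and in which only finitely many cuts separate two given points. -/
structure NestedCuts (G X : Type*) [Group G] [MulAction G X] where
  cuts : Set (Set X)
  smul_mem (g : G) {A : Set X} : A ∈ cuts → g • A ∈ cuts
  compl_mem {A : Set X} : A ∈ cuts → Aᶜ ∈ cuts
  not_crosses {A B : Set X} : A ∈ cuts → B ∈ cuts → ¬ Crosses A B
  nonempty {A : Set X} : A ∈ cuts → A.Nonempty
  finite_separating (x y : X) : {A ∈ cuts | x ∈ A ∧ y ∉ A}.Finite

namespace NestedCuts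

variable {G X : Type*} [Group G] [MulAction G X]

/-- An oriented edge of the tree dual to `N`. A cut would give a single edge, on which an element
exchanging the cut and its complement acts as an inversion; the sign distinguishes the two halves
of the subdivided edge. -/
@[ext] structure OrientedEdge (N : NestedCuts G X) where
  cut : Set X
  mem : cut ∈ N.cuts
  sign : Bool

variable {N : NestedCuts G X}

namespace OrientedEdge

variable {a b : N.OrientedEdge}

instance : Compl N.OrientedEdge where
  compl a := ⟨a.cutᶜ, N.compl_mem a.mem, !a.sign⟩

instance : PartialOrder N.OrientedEdge :=
  PartialOrder.lift (fun a ↦ toLex (a.cut, a.sign)) fun _ _ h ↦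
    OrientedEdge.ext (congrArg (·.1) h) (congrArg (·.2) h)

instance : MulAction G N.OrientedEdge where
  smul g a := ⟨g • a.cut, N.smul_mem g a.mem, a.sign⟩
  one_smul a := OrientedEdge.ext (one_smul G a.cut) rfl
  mul_smul g h a := OrientedEdge.ext (mul_smul g h a.cut) rfl

theorem cut_compl (a : N.OrientedEdge) : aᶜ.cut = a.cutᶜ := rfl

theorem sign_compl (a : N.OrientedEdge) : aᶜ.sign = !a.sign := rfl

theorem cut_smul (g : G) (a : N.OrientedEdge) : (g • a).cut = g • a.cut := rfl

theorem sign_smul (g : G) (a : N.OrientedEdge) : (g • a).sign = a.sign := rfl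

theorem smul_compl (g : G) (a : N.OrientedEdge) : g • aᶜ = (g • a)ᶜ :=
  OrientedEdge.ext Set.smul_set_compl rfl

theorem compl_compl (a : N.OrientedEdge) : aᶜᶜ = a :=
  OrientedEdge.ext (_root_.compl_compl a.cut) (Bool.not_not a.sign)

theorem le_def : a ≤ b ↔ a.cut ⊂ b.cut ∨ a.cut = b.cut ∧ a.sign ≤ b.sign :=
  Prod.Lex.le_iff

theorem cut_subset (h : a ≤ b) : a.cut ⊆ b.cut :=
  (le_def.1 h).elim (·.subset) (·.1.subset)

theorem le_total_of_cut_subset (h : a.cut ⊆ b.cut) : a ≤ b ∨ b ≤ a := by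
  simp only [le_def]
  rcases h.eq_or_ssubset with h | h
  · exact (le_total a.sign b.sign).imp (fun hs ↦ Or.inr ⟨h, hs⟩) fun hs ↦ Or.inr ⟨h.symm, hs⟩
  · exact Or.inl (Or.inl h)

theorem compl_le_compl (h : a ≤ b) : bᶜ ≤ aᶜ := by
  refine le_def.2 ((le_def.1 h).imp compl_lt_compl_iff_lt.2 fun ⟨hc, hs⟩ ↦ ?_)
  exact ⟨congrArg Compl.compl hc.symm, _root_.compl_le_compl hs⟩

theorem compl_le_compl_iff : bᶜ ≤ aᶜ ↔ a ≤ b :=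
  ⟨fun h ↦ compl_compl a ▸ compl_compl b ▸ compl_le_compl h, compl_le_compl⟩

theorem compl_le_comm : aᶜ ≤ b ↔ bᶜ ≤ a :=
  ⟨fun h ↦ compl_compl a ▸ compl_le_compl h, fun h ↦ compl_compl b ▸ compl_le_compl h⟩

theorem le_compl_comm : a ≤ bᶜ ↔ b ≤ aᶜ :=
  ⟨fun h ↦ compl_compl b ▸ compl_le_compl h, fun h ↦ compl_compl a ▸ compl_le_compl h⟩

theorem smul_le_smul (g : G) (h : a ≤ b) : g • a ≤ g • b := by
  simpa only [le_def, cut_smul, sign_smul, ssubset_iff_subset_not_subset,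
    Set.smul_set_subset_smul_set_iff, smul_left_cancel_iff] using h

theorem not_le_compl (a : N.OrientedEdge) : ¬ a ≤ aᶜ := fun h ↦
  let ⟨_, hx⟩ := N.nonempty a.mem
  cut_subset h hx hx

theorem not_compl_le (a : N.OrientedEdge) : ¬ aᶜ ≤ a := by
  simpa only [compl_compl] using not_le_compl aᶜ

theorem nested (a b : N.OrientedEdge) : a ≤ b ∨ b ≤ a ∨ a ≤ bᶜ ∨ bᶜ ≤ a := by
  have hcut : a.cut ⊆ b.cut ∨ b.cut ⊆ a.cut ∨ a.cut ⊆ bᶜ.cut ∨ bᶜ.cut ⊆ a.cut := by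
    have h := N.not_crosses a.mem b.mem
    contrapose! h
    simp only [Set.not_subset, cut_compl, Set.notMem_compl_iff] at h
    obtain ⟨⟨x, hx⟩, ⟨y, hy⟩, ⟨z, hz⟩, w, hw⟩ := h
    exact ⟨⟨⟨z, hz⟩, ⟨x, hx⟩⟩, ⟨y, hy.symm⟩, ⟨w, hw.symm⟩⟩
  rcases hcut with h | h | h | h <;> have := le_total_of_cut_subset h <;> tauto

theorem finite_separating (N : NestedCuts G X) (x y : X) :
    {a : N.OrientedEdge | x ∈ a.cut ∧ y ∉ a.cut}.Finite := by
  refine Set.Finite.of_finite_image (f := fun a ↦ (a.cut, a.sign)) ?_ ?_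
  · refine ((N.finite_separating x y).prod Set.finite_univ).subset ?_
    rintro _ ⟨a, ha, rfl⟩
    exact ⟨⟨a.mem, ha⟩, trivial⟩
  · intro a _ b _ h
    exact OrientedEdge.ext (congrArg (·.1) h) (congrArg (·.2) h)

end OrientedEdge

open OrientedEdge

/-- A vertex of the tree dual to `N`: an upward closed choice of one orientation of each edge, the
edge pointing towards the vertex. The finiteness condition excludes the ends of the tree. -/
structure Vertex (N : NestedCuts G X) where
  carrier : Set N.OrientedEdge
  compl_mem_iff' (a : N.OrientedEdge) : aᶜ ∈ carrier ↔ a ∉ carrier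
  isUpperSet : IsUpperSet carrier
  finite_notMem_cut (x : X) : {a ∈ carrier | x ∉ a.cut}.Finite

namespace Vertex

variable {a b : N.OrientedEdge} {v w : N.Vertex} {g : G}

instance : SetLike N.Vertex N.OrientedEdge where
  coe := carrier
  coe_injective := by
    rintro ⟨⟩ ⟨⟩ h
    congr

theorem compl_mem_iff : aᶜ ∈ v ↔ a ∉ v := v.compl_mem_iff' a

theorem mem_of_le (h : a ≤ b) (ha : a ∈ v) : b ∈ v := v.isUpperSet h ha

instance : SMul G N.Vertex where
  smul g v :=
    { carrier := g • (v : Set N.OrientedEdge)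
      compl_mem_iff' a := by
        simp only [Set.mem_smul_set_iff_inv_smul_mem, smul_compl, SetLike.mem_coe, compl_mem_iff]
      isUpperSet a b h ha := by
        rw [Set.mem_smul_set_iff_inv_smul_mem] at ha ⊢
        exact mem_of_le (smul_le_smul g⁻¹ h) ha
      finite_notMem_cut x := by
        refine ((v.finite_notMem_cut (g⁻¹ • x)).image (g • ·)).subset ?_
        rintro _ ⟨⟨a, ha, rfl⟩, hx⟩
        refine ⟨a, ⟨ha, ?_⟩, rfl⟩
        rwa [cut_smul, Set.mem_smul_set_iff_inv_smul_mem] at hx }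

instance : MulAction G N.Vertex :=
  SetLike.coe_injective.mulAction _ fun _ _ ↦ rfl

theorem smul_mem_smul_iff : g • a ∈ g • v ↔ a ∈ v :=
  Set.smul_mem_smul_set_iff (s := (v : Set N.OrientedEdge))

theorem mem_smul_iff : a ∈ g • v ↔ g⁻¹ • a ∈ v :=
  Set.mem_smul_set_iff_inv_smul_mem (A := (v : Set N.OrientedEdge))

/-- The vertex of the dual tree given by a point of `X`. -/
def ofPoint (N : NestedCuts G X) (x : X) : N.Vertex where
  carrier := {a | x ∈ a.cut}
  compl_mem_iff' _ := Iff.rfl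
  isUpperSet _ _ h hx := cut_subset h hx
  finite_notMem_cut := OrientedEdge.finite_separating N x

/-- The terminal vertex of an oriented edge. -/
def head (a : N.OrientedEdge) : N.Vertex where
  carrier := {b | a ≤ b ∨ bᶜ < a}
  compl_mem_iff' b := by
    simp only [Set.mem_ofPred_eq, OrientedEdge.compl_compl]
    constructor
    · rintro (h | h) (h' | h')
      · exact not_le_compl a (h'.trans (le_compl_comm.1 h))
      · exact h'.not_ge h
      · exact h.not_ge h'
      · exact not_compl_le a ((compl_le_comm.1 h'.le).trans h.le)
    · intro h
      push Not at h
      rcases nested a b with h' | h' | h' | h'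
      · exact absurd h' h.1
      · exact Or.inr (h'.lt_of_not_ge h.1)
      · exact Or.inl h'
      · exact Or.inl (not_lt_iff_le_imp_ge.1 h.2 h')
  isUpperSet b d hbd h :=
    h.imp (·.trans hbd) (OrientedEdge.compl_le_compl hbd).trans_lt
  finite_notMem_cut x := by
    obtain ⟨y, hy⟩ := N.nonempty a.mem
    obtain ⟨z, hz⟩ := N.nonempty (N.compl_mem a.mem)
    refine ((OrientedEdge.finite_separating N y x).union
      (OrientedEdge.finite_separating N z x)).subset ?_
    rintro b ⟨h | h, hx⟩
    · exact Or.inl ⟨cut_subset h hy, hx⟩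
    · exact Or.inr ⟨not_not.1 fun hzb ↦ hz (cut_subset h.le hzb), hx⟩

theorem mem_head_self (a : N.OrientedEdge) : a ∈ head a := Or.inl le_rfl

theorem notMem_head_compl (a : N.OrientedEdge) : a ∉ head aᶜ :=
  compl_mem_iff.1 (mem_head_self aᶜ)

theorem eq_of_mem_head (h : b ∈ head a) (h' : b ∉ head aᶜ) : b = a := by
  rcases h with h | h <;> rcases compl_mem_iff.2 h' with h'' | h''
  · exact (compl_le_compl_iff.1 h'').antisymm h
  · exact absurd (h.trans ((OrientedEdge.compl_compl b).symm.trans_le h''.le)) (not_le_compl a)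
  · exact absurd (h''.trans h.le) (not_compl_le a)
  · rw [OrientedEdge.compl_compl] at h''
    exact absurd (le_compl_comm.1 h''.le) h.not_ge

/-- The vertices lying ahead of an oriented edge of the dual tree. -/
def halfspace (a : N.OrientedEdge) : Set N.Vertex := {v | a ∈ v}

theorem smul_halfspace (g : G) (a : N.OrientedEdge) : g • halfspace a = halfspace (g • a) := by
  ext v
  rw [Set.mem_smul_set_iff_inv_smul_mem]
  exact mem_smul_iff.trans (by rw [inv_inv]; rfl)

theorem halfspace_compl (a : N.OrientedEdge) : halfspace aᶜ = (halfspace a)ᶜ :=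
  Set.ext fun _ ↦ compl_mem_iff

theorem halfspace_mono (h : a ≤ b) : halfspace a ⊆ halfspace b := fun _ ↦ mem_of_le h

theorem halfspace_injective : Function.Injective (halfspace (N := N)) := by
  intro a b h
  have hmem : head b ∈ halfspace a := h ▸ mem_head_self b
  have hnot : head bᶜ ∉ halfspace a := h ▸ notMem_head_compl b
  exact eq_of_mem_head hmem hnot

theorem finite_mem_notMem (v w : N.Vertex) : {a | a ∉ v ∧ a ∈ w}.Finite := by
  rcases isEmpty_or_nonempty X with _ | ⟨⟨x⟩⟩
  · exact Set.finite_empty.subset fun a _ ↦ IsEmpty.elim ‹_› (N.nonempty a.mem).some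
  · refine ((w.finite_notMem_cut x).union ((v.finite_notMem_cut x).image Compl.compl)).subset ?_
    rintro a ⟨hv, hw⟩
    by_cases hx : x ∈ a.cut
    · exact Or.inr ⟨aᶜ, ⟨compl_mem_iff.2 hv, fun h ↦ h hx⟩, OrientedEdge.compl_compl a⟩
    · exact Or.inl ⟨hw, hx⟩

theorem exists_notMem_mem (h : v ≠ w) : ∃ a, a ∉ v ∧ a ∈ w := by
  contrapose! h
  refine SetLike.ext fun a ↦ ⟨fun hv ↦ ?_, fun hw ↦ not_not.1 fun hv ↦ h a hv hw⟩
  by_contra hw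
  exact h aᶜ (mt compl_mem_iff.1 (not_not.2 hv)) (compl_mem_iff.2 hw)

end Vertex

open Vertex

/-- The tree dual to a nested family of cuts. -/
def dualTree (N : NestedCuts G X) : HalfspaceTree G N.Vertex where
  halfspaces := Set.range halfspace
  smul_mem := by
    rintro g _ ⟨a, rfl⟩
    exact ⟨g • a, (smul_halfspace g a).symm⟩
  compl_mem := by
    rintro _ ⟨a, rfl⟩
    exact ⟨aᶜ, halfspace_compl a⟩
  smul_ne_compl := by
    rintro g _ ⟨a, rfl⟩ h
    rw [smul_halfspace, ← halfspace_compl] at h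
    have hsign := congrArg sign (halfspace_injective h)
    rw [sign_smul, sign_compl] at hsign
    exact Bool.not_ne_self _ hsign.symm
  nested := by
    rintro _ _ ⟨a, rfl⟩ ⟨b, rfl⟩
    rw [← halfspace_compl]
    exact (nested a b).imp halfspace_mono (.imp halfspace_mono (.imp halfspace_mono halfspace_mono))
  finite_separating v w := by
    refine ((finite_mem_notMem v w).image halfspace).subset ?_
    rintro _ ⟨⟨a, rfl⟩, h⟩
    exact ⟨a, h, rfl⟩
  separating_nonempty h :=
    let ⟨a, ha⟩ := exists_notMem_mem h
    ⟨halfspace a, ⟨a, rfl⟩, ha⟩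
  exists_edge := by
    rintro _ ⟨a, rfl⟩
    refine ⟨head aᶜ, head a, Set.eq_singleton_iff_unique_mem.2
      ⟨⟨⟨a, rfl⟩, notMem_head_compl a, mem_head_self a⟩, ?_⟩⟩
    rintro _ ⟨⟨b, rfl⟩, h, h'⟩
    rw [eq_of_mem_head h' h]

theorem ssubset_inv_smul {A : Set X} {g : G} (h : g • A ⊂ A) : A ⊂ g⁻¹ • A := by
  rwa [ssubset_iff_subset_not_subset, ← Set.smul_set_subset_iff_subset_inv_smul_set,
    ← Set.subset_smul_set_iff, ← ssubset_iff_subset_not_subset]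

theorem inv_smul_ssubset {A : Set X} {g : G} (h : A ⊂ g • A) : g⁻¹ • A ⊂ A := by
  rwa [ssubset_iff_subset_not_subset, ← Set.subset_smul_set_iff,
    ← Set.smul_set_subset_iff_subset_inv_smul_set, ← ssubset_iff_subset_not_subset]

/-- If `g` fixed `v`, the infinitely many edges `gⁿ • a` would all point towards `v` while all but
finitely many of the edges pointing towards `v` contain a given point in their cut. -/
theorem smul_ne_of_mem_of_smul_ssubset {g : G} {v : N.Vertex} {a : N.OrientedEdge}
    (ha : a ∈ v) (h : g • a.cut ⊂ a.cut) : g • v ≠ v := by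
  intro hv
  have hpow (n : ℕ) : g ^ n • a ∈ v := by
    have : g ^ n • v = v := pow_mem (MulAction.mem_stabilizer_iff.2 hv) n
    rwa [← this, smul_mem_smul_iff]
  have hanti : StrictAnti fun n : ℕ ↦ (g ^ n • a).cut := by
    refine strictAnti_nat_of_succ_lt fun n ↦ ?_
    simpa [pow_succ, mul_smul, cut_smul, ssubset_iff_subset_not_subset] using h
  obtain ⟨y, hy⟩ := N.nonempty (N.compl_mem a.mem)
  refine Set.infinite_range_of_injective (f := fun n : ℕ ↦ g ^ n • a)
    (fun m n hmn ↦ hanti.injective (congrArg cut hmn)) ((v.finite_notMem_cut y).subset ?_)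
  rintro _ ⟨n, rfl⟩
  refine ⟨hpow n, fun hyn ↦ hy ?_⟩
  simpa using hanti.antitone n.zero_le hyn

theorem smul_ne_of_translates {g : G} {A : Set X} (hA : A ∈ N.cuts)
    (h : g • A ⊂ A ∨ A ⊂ g • A) (v : N.Vertex) : g • v ≠ v := by
  wlog hsub : g • A ⊂ A generalizing g
  · have hinv := this (g := g⁻¹) (h.symm.imp inv_smul_ssubset ssubset_inv_smul)
      (inv_smul_ssubset (h.resolve_left hsub))
    exact fun hv ↦ hinv (inv_smul_eq_iff.2 hv.symm)
  let a : N.OrientedEdge := ⟨A, hA, true⟩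
  by_cases ha : a ∈ v
  · exact smul_ne_of_mem_of_smul_ssubset ha hsub
  · have hcompl : g⁻¹ • aᶜ.cut ⊂ aᶜ.cut := by
      rw [cut_compl, Set.smul_set_compl]
      exact compl_lt_compl_iff_lt.2 (ssubset_inv_smul hsub)
    have hinv := smul_ne_of_mem_of_smul_ssubset (compl_mem_iff.2 ha) hcompl
    exact fun hv ↦ hinv (inv_smul_eq_iff.2 hv.symm)

theorem finite_stabilizer {H : Subgroup G} [H.FiniteIndex]
    (hH : ∀ g ∈ H, g ≠ 1 → ∃ A ∈ N.cuts, g • A ⊂ A ∨ A ⊂ g • A) (v : N.Vertex) :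
    Finite (MulAction.stabilizer G v) := by
  refine finite_of_disjoint_finiteIndex (H := H) (Subgroup.disjoint_def.2 fun {g} hg hgv ↦ ?_)
  by_contra hg1
  obtain ⟨A, hA, h⟩ := hH g hg hg1
  exact smul_ne_of_translates hA h v hgv

end NestedCuts

end DualTree

section VirtuallyFree

open SimpleGraph

variable {G : Type*} [Group G]

/-- The cuts of the Cayley graph of `G` from which the tree of `G` is built. -/
def optimalNestedCuts {S : Set G} (hS : Subgroup.closure S = ⊤) (K : ℕ) : NestedCuts G G where
  cuts := optimalCuts (mulCayley S) K
  smul_mem g _ := smul_mem_optimalCuts g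
  compl_mem := compl_mem_optimalCuts
  not_crosses := not_crosses_of_mem_optimalCuts (preconnected_mulCayley hS)
  nonempty h := nonempty_of_mem_optimalCuts h
  finite_separating x y :=
    (finite_minCuts_separating (preconnected_mulCayley hS) x y).subset fun _ hA ↦
      ⟨optimalCuts_subset_minCuts hA.1, hA.2⟩

theorem VirtuallyFree.exists_nestedCuts_finite_stabilizer (hG : VirtuallyFree G) [Group.FG G] :
    ∃ N : NestedCuts G G, ∀ v : N.Vertex, Finite (MulAction.stabilizer G v) := by
  obtain ⟨S, hS, hSf⟩ := Group.fg_iff.1 ‹Group.FG G›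
  obtain ⟨H, hH, ⟨hfree⟩⟩ := hG
  let e := IsFreeGroup.toFreeGroup H
  have : Group.FG (FreeGroup (IsFreeGroup.Generators H)) :=
    Group.fg_of_surjective (f := e.toMonoidHom) e.surjective
  have := finite_of_fg_freeGroup (ι := IsFreeGroup.Generators H)
  obtain ⟨K, hK⟩ := exists_forall_isHyperbolic hSf hS e
  exact ⟨optimalNestedCuts hS K, NestedCuts.finite_stabilizer hK⟩

end VirtuallyFree

/-- Finitely generated co-Hopfian virtually free groups are rigid: every
endomorphism equivalent to the identity is an automorphism. -/
theorem coHopfian_virtuallyFree_rigid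
    (G : Type*) [Group G] (hfg : Group.FG G) (hvf : VirtuallyFree G)
    (hco : CoHopfian G) :
    ∀ φ : G →* G, HomEquiv φ (MonoidHom.id G) → Function.Bijective φ := by
  intro φ hφ
  obtain ⟨N, hN⟩ := hvf.exists_nestedCuts_finite_stabilizer
  have : Nonempty N.Vertex := ⟨.ofPoint N 1⟩
  have hconj (v : N.Vertex) : ∃ q : G, ∀ h ∈ MulAction.stabilizer G v, φ h = q * h * q⁻¹ := by
    obtain ⟨g, hg⟩ := hφ (MulAction.stabilizer G v) (Set.toFinite _)
    refine ⟨g⁻¹, fun h hh ↦ ?_⟩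
    conv_rhs => rw [← MonoidHom.id_apply G h, hg h hh]
    group
  have hinj := N.dualTree.injective_of_forall_stabilizer_conj hco hconj
  exact ⟨hinj, hco φ hinj⟩
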